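/- A minimal graph story S = (G, 5, τ) is 1-reroute realizable if and only if G does not contain K_5 as a subgraph. In particular, every minimal graph story with ω = 5 whose graph does not contain K_5 admits a 1-reroute realization on any arbitrarily chosen set of 5 points. -/

import Mathlib

open Set

namespace GraphStories

/-- Points of the plane. -/
abbrev Pt : Type := ℝ × ℝ

/-- The vertex set of the window graph `G_i` (time `i` is 1-indexed, vertex
`v_j : Fin n` sits at position `j+1` in the ordering `τ`):
`v_j ∈ G_i` iff `max{1, i-ω+1} ≤ j+1 ≤ i`. -/
def window (n ω i : ℕ) : Set (Fin n) := {j | j.val + 1 ≤ i ∧ i ≤ j.val + ω}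

/-- All edges of `G` are visible: `|i - j| < ω` for every edge `(v_i, v_j)`. -/
def Visible (n ω : ℕ) (G : SimpleGraph (Fin n)) : Prop :=
  ∀ u v : Fin n, G.Adj u v → u.val < v.val + ω ∧ v.val < u.val + ω

/-- The data of a drawing: a position for every vertex, and a parametrized curve
for every (ordered) pair of vertices (only the data attached to the vertices and
edges of the relevant subgraph is meaningful). -/
structure RawDrawing (n : ℕ) where
  pos : Fin n → Pt
  curve : Fin n → Fin n → ℝ → Pt

/-- `γ` (restricted to `[0,1]`) is a Jordan arc from `a` to `b`. -/
def IsArcFrom (γ : ℝ → Pt) (a b : Pt) : Prop :=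
  ContinuousOn γ (Icc 0 1) ∧ InjOn γ (Icc 0 1) ∧ γ 0 = a ∧ γ 1 = b

/-- The set of points of an arc. -/
def arcBody (γ : ℝ → Pt) : Set Pt := γ '' Icc (0 : ℝ) 1

/-- The set of interior points of an arc (endpoints removed). -/
def arcInterior (γ : ℝ → Pt) : Set Pt := γ '' Ioo (0 : ℝ) 1

/-- `D` is a planar drawing of the subgraph of `G` induced by `S`, with the
vertices mapped to (distinct) points of `P` and the edges drawn as Jordan arcs
which pairwise do not intersect except at common endpoints. -/
structure IsPlanarDrawingOn (n : ℕ) (G : SimpleGraph (Fin n)) (S : Set (Fin n))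
    (P : Set Pt) (D : RawDrawing n) : Prop where
  pos_mem : ∀ v ∈ S, D.pos v ∈ P
  pos_inj : InjOn D.pos S
  curve_symm : ∀ u v : Fin n, D.curve v u = fun t => D.curve u v (1 - t)
  arc : ∀ u ∈ S, ∀ v ∈ S, G.Adj u v → IsArcFrom (D.curve u v) (D.pos u) (D.pos v)
  vertex_off_arc : ∀ u ∈ S, ∀ v ∈ S, G.Adj u v → ∀ w ∈ S,
      D.pos w ∉ arcInterior (D.curve u v)
  no_cross : ∀ u ∈ S, ∀ v ∈ S, ∀ x ∈ S, ∀ y ∈ S, G.Adj u v → G.Adj x y →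
      s(u, v) ≠ s(x, y) →
      arcInterior (D.curve u v) ∩ arcInterior (D.curve x y) = ∅

/-- `D` is a planar drawing of the subgraph of `G` induced by `S` (anywhere in
the plane). -/
def IsPlanarDrawing (n : ℕ) (G : SimpleGraph (Fin n)) (S : Set (Fin n))
    (D : RawDrawing n) : Prop :=
  IsPlanarDrawingOn n G S univ D

/-- A realization of the graph story `(G, ω, k, τ)` on the point set `P`:
a sequence `Γ_1, …, Γ_n` of planar drawings of the window graphs `G_1, …, G_n`
on `P` (property R1) such that consecutive drawings restrict identically
(vertex positions and edge arcs) to the common subgraph `G_{i-1} ∩ G_i`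
(property R2). -/
structure Realization (n ω : ℕ) (G : SimpleGraph (Fin n)) (P : Set Pt) where
  Γ : ℕ → RawDrawing n
  planar : ∀ i, 1 ≤ i → i ≤ n → IsPlanarDrawingOn n G (window n ω i) P (Γ i)
  pos_eq : ∀ i, 2 ≤ i → i ≤ n → ∀ v ∈ window n ω (i - 1) ∩ window n ω i,
      (Γ i).pos v = (Γ (i - 1)).pos v
  curve_eq : ∀ i, 2 ≤ i → i ≤ n →
      ∀ u ∈ window n ω (i - 1) ∩ window n ω i,
      ∀ v ∈ window n ω (i - 1) ∩ window n ω i,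
      G.Adj u v → (Γ i).curve u v = (Γ (i - 1)).curve u v

/-- The story `(G, ω, k, τ)` admits a realization on the point set `P`. -/
def RealizableOn (n ω : ℕ) (G : SimpleGraph (Fin n)) (P : Set Pt) : Prop :=
  Nonempty (Realization n ω G P)

/-- The story `(G, ω, k, τ)` is realizable: it admits a realization on some set
of `ω + k` points. -/
def Realizable (n ω k : ℕ) (G : SimpleGraph (Fin n)) : Prop :=
  ∃ P : Finset Pt, P.card = ω + k ∧ RealizableOn n ω G ↑P


/-- The set of points of the plane used by the drawing `D` of the subgraph of
`G` induced by `S` (vertex points and edge arcs). -/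
def drawingImage (n : ℕ) (G : SimpleGraph (Fin n)) (S : Set (Fin n))
    (D : RawDrawing n) : Set Pt :=
  (D.pos '' S) ∪
    ⋃ (u : Fin n) (v : Fin n) (_ : u ∈ S) (_ : v ∈ S) (_ : G.Adj u v),
      arcBody (D.curve u v)

/-- The two drawings `D, D'` of the subgraph of `G` induced by `S`, carrying the
respective sets `Q, Q'` of marked points, determine the same (face-weighted)
planar embedding: some self-homeomorphism of the plane maps the first drawing
onto the second, vertex-by-vertex and arc-by-arc, and maps the first set of
marked points onto the second (so corresponding faces carry equally many
marked points).  Weights of faces are represented by marked points lying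
inside them. -/
def SameMarkedEmbedding (n : ℕ) (G : SimpleGraph (Fin n)) (S : Set (Fin n))
    (D D' : RawDrawing n) (Q Q' : Set Pt) : Prop :=
  ∃ φ : Homeomorph Pt Pt,
    (∀ v ∈ S, φ (D.pos v) = D'.pos v) ∧
    (∀ u ∈ S, ∀ v ∈ S, G.Adj u v →
        φ '' arcBody (D.curve u v) = arcBody (D'.curve u v)) ∧
    φ '' Q = Q'

/-- A face-`k`-weighted planar embedding of the subgraph of `G` induced by `S`,
represented by a planar drawing together with `k` marked points placed off the
drawing (the weight of a face is the number of marked points it contains). -/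
structure WeightedDrawing (n k : ℕ) (G : SimpleGraph (Fin n)) (S : Set (Fin n)) where
  D : RawDrawing n
  planar : IsPlanarDrawing n G S D
  marks : Finset Pt
  marks_card : marks.card = k
  marks_off : ∀ p ∈ marks, p ∉ drawingImage n G S D

/-- Compatibility of two consecutive face-`k`-weighted planar embeddings
`W` of `G_{i-1}` and `W'` of `G_i`: removing the vertex `v_{i-ω}` from `W`
(replacing it by one extra marked point, accounting for the weight increase of
the merged face) yields the same face-`(k+1)`-weighted planar embedding of
`G_{i-1} ∩ G_i` as removing `v_i` from `W'`. -/
def CompatiblePair (n ω k : ℕ) (G : SimpleGraph (Fin n)) (i : ℕ)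
    (W : WeightedDrawing n k G (window n ω (i - 1)))
    (W' : WeightedDrawing n k G (window n ω i)) : Prop :=
  ∃ a b : Fin n, a.val + 1 + ω = i ∧ b.val + 1 = i ∧
    SameMarkedEmbedding n G (window n ω (i - 1) ∩ window n ω i) W.D W'.D
      (↑W.marks ∪ {W.D.pos a}) (↑W'.marks ∪ {W'.D.pos b})

/-- The face (connected component of the complement of the drawing) containing
the point `p`. -/
def faceOf (X : Set Pt) (p : Pt) : Set Pt := connectedComponentIn Xᶜ p

/-- The drawing `D'` is obtained from the drawing `D` (both of the subgraph of
`G` induced by `S`) by rerouting the edge `e` with respect to the point `p`: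
everything but the arc of `e` is unchanged, the planar embedding is preserved,
and `p` — which lies in a face `f` incident to `e` before the rerouting — lies
in the other face `f'` incident to `e` after the rerouting. -/
def IsRerouteStep (n : ℕ) (G : SimpleGraph (Fin n)) (S : Set (Fin n))
    (D D' : RawDrawing n) (e : Sym2 (Fin n)) (p : Pt) : Prop :=
  ∃ u v : Fin n, e = s(u, v) ∧ u ∈ S ∧ v ∈ S ∧ G.Adj u v ∧
    p ∉ drawingImage n G S D ∧ p ∉ drawingImage n G S D' ∧
    arcInterior (D.curve u v) ⊆ closure (faceOf (drawingImage n G S D) p) ∧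
    arcInterior (D'.curve u v) ⊆ closure (faceOf (drawingImage n G S D') p) ∧
    faceOf (drawingImage n G S D) p ≠ faceOf (drawingImage n G S D') p ∧
    SameMarkedEmbedding n G S D D' ∅ ∅

/-- An `h`-reroute realization of the story `(G, ω, k, τ)` on the point set
`P`: a sequence of planar drawings of the window graphs on `P` (property R1)
such that the restriction of `Γ_i` to `G_{i-1} ∩ G_i` is obtained from the
restriction of `Γ_{i-1}` by rerouting at most `h` distinct edges with respect
to points of `P`. -/
structure RerouteRealization (n ω h : ℕ) (G : SimpleGraph (Fin n)) (P : Set Pt) where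
  Γ : ℕ → RawDrawing n
  planar : ∀ i, 1 ≤ i → i ≤ n → IsPlanarDrawingOn n G (window n ω i) P (Γ i)
  pos_eq : ∀ i, 2 ≤ i → i ≤ n → ∀ v ∈ window n ω (i - 1) ∩ window n ω i,
      (Γ i).pos v = (Γ (i - 1)).pos v
  reroute : ∀ i, 2 ≤ i → i ≤ n →
      ∃ F : Finset (Sym2 (Fin n)), F.card ≤ h ∧
        (∀ u ∈ window n ω (i - 1) ∩ window n ω i,
         ∀ v ∈ window n ω (i - 1) ∩ window n ω i,
            G.Adj u v → s(u, v) ∉ F → (Γ i).curve u v = (Γ (i - 1)).curve u v) ∧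
        (∀ e ∈ F, ∃ p ∈ P,
            IsRerouteStep n G (window n ω (i - 1) ∩ window n ω i)
              (Γ (i - 1)) (Γ i) e p)

/-- The story is `h`-reroute realizable (with `k` extra points). -/
def RerouteRealizable (n ω k h : ℕ) (G : SimpleGraph (Fin n)) : Prop :=
  ∃ P : Finset Pt, P.card = ω + k ∧ Nonempty (RerouteRealization n ω h G ↑P)

/-- `G` contains `K₅` (as a subgraph). -/
def ContainsK5 (n : ℕ) (G : SimpleGraph (Fin n)) : Prop :=
  ∃ f : Fin 5 → Fin n, Function.Injective f ∧ ∀ i j, i ≠ j → G.Adj (f i) (f j)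

end GraphStories

namespace GraphStories

section K5
open Complex

theorem exists_log_plane (F : ℝ × ℝ → ℂ) (hF : Continuous F) (h0 : ∀ x, F x ≠ 0) :
    ∃ L : ℝ × ℝ → ℂ, Continuous L ∧ ∀ x, exp (L x) = F x := by
  obtain ⟨f, ⟨-, hf⟩, -⟩ := isCoveringMapOn_exp.existsUnique_continuousMap_lifts
    (⟨F, hF⟩ : C(ℝ × ℝ, ℂ)) (a₀ := (0, 0)) (e₀ := log (F (0, 0))) (exp_log (h0 _))
    (fun x => h0 x)
  exact ⟨f, f.continuous, fun x => congrFun hf x⟩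

theorem exists_log_line (F : ℝ → ℂ) (hF : Continuous F) (h0 : ∀ x, F x ≠ 0) :
    ∃ L : ℝ → ℂ, Continuous L ∧ ∀ x, exp (L x) = F x := by
  obtain ⟨L, hL, hL'⟩ := exists_log_plane (fun x => F x.1) (by fun_prop) (fun x => h0 _)
  exact ⟨fun t => L (t, 0), by fun_prop, fun x => hL' _⟩

/-- Two continuous logarithms of functions differing by a constant factor have the same
increments. -/
theorem log_incr_unique (L L' : ℝ → ℂ) (hL : Continuous L) (hL' : Continuous L') (k : ℂ)
    (h : ∀ x, exp (L x) = k * exp (L' x)) (a b : ℝ) :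
    L b - L a = L' b - L' a := by
  have hk : k ≠ 0 := by
    rintro rfl
    have := h 0
    simp [exp_ne_zero] at this
  have key : ∀ x, ∃ m : ℤ, (L x - L' x - log k) = m * (2 * Real.pi * I) := by
    intro x
    have : exp (L x - L' x - log k) = 1 := by
      rw [exp_sub, exp_sub, exp_log hk, h x]
      field_simp [exp_ne_zero]
      try exact div_self (exp_ne_zero _)
    exact (exp_eq_one_iff.mp this)
  choose m hm using key
  have hpi : (2 * Real.pi : ℝ) ≠ 0 := by positivity
  have hmr : ∀ x, (m x : ℝ) = (L x - L' x - log k).im / (2 * Real.pi) := by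
    intro x
    rw [hm x]
    simp
  have hcont : Continuous (fun x => (m x : ℝ)) := by
    simp_rw [hmr]
    have : Continuous fun x => (L x - L' x - log k).im :=
      continuous_im.comp (by fun_prop)
    fun_prop
  have hcont' : Continuous m := by
    have := Int.isClosedEmbedding_coe_real.isInducing.continuous_iff (f := m)
    exact this.mpr hcont
  have hconst : m a = m b := by
    exact (IsPreconnected.constant isPreconnected_univ hcont'.continuousOn (mem_univ a) (mem_univ b))
  have ha := hm a
  have hb := hm b
  rw [hconst] at ha
  linear_combination hb - ha

theorem square_rel (f g : ℝ → ℂ) (hf : Continuous f) (hg : Continuous g)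
    (hfg : ∀ s t, f s ≠ g t)
    (L0 L1 M0 M1 : ℝ → ℂ) (hL0 : Continuous L0) (hL1 : Continuous L1) (hM0 : Continuous M0)
    (hM1 : Continuous M1)
    (eL0 : ∀ s, exp (L0 s) = f s - g 0) (eL1 : ∀ s, exp (L1 s) = f s - g 1)
    (eM0 : ∀ t, exp (M0 t) = g t - f 0) (eM1 : ∀ t, exp (M1 t) = g t - f 1) :
    (L0 1 - L0 0) + (M1 1 - M1 0) = (L1 1 - L1 0) + (M0 1 - M0 0) := by
  obtain ⟨K, hK, eK⟩ := exists_log_plane (fun x => f x.1 - g x.2) (by fun_prop)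
    (fun x => sub_ne_zero.mpr (hfg _ _))
  have h1 := log_incr_unique L0 (fun s => K (s, 0)) hL0 (by fun_prop) 1
    (by intro x; rw [eK, eL0]; ring) 0 1
  have h2 := log_incr_unique L1 (fun s => K (s, 1)) hL1 (by fun_prop) 1
    (by intro x; rw [eK, eL1]; ring) 0 1
  have h3 := log_incr_unique M0 (fun s => K (0, s)) hM0 (by fun_prop) (-1)
    (by intro x; rw [eK, eM0]; ring) 0 1
  have h4 := log_incr_unique M1 (fun s => K (1, s)) hM1 (by fun_prop) (-1)
    (by intro x; rw [eK, eM1]; ring) 0 1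
  rw [h1, h2, h3, h4]
  ring

/-- Order sign used in the parity count. -/
def eps (u v : Fin 5) : ℤ := if u < v then -1 else 1

theorem K5_aux (z : Fin 5 → ℂ) (γ : Fin 5 → Fin 5 → ℝ → ℂ)
    (hc : ∀ i j, i ≠ j → Continuous (γ i j))
    (h0 : ∀ i j, i ≠ j → γ i j 0 = z i) (h1 : ∀ i j, i ≠ j → γ i j 1 = z j)
    (hd : ∀ i j k l, i ≠ j → k ≠ l → i ≠ k → i ≠ l → j ≠ k → j ≠ l →
      ∀ s t, γ i j s ≠ γ k l t) : False := by
  have ex : ∀ i j k : Fin 5, ∃ l, l ≠ i ∧ l ≠ j ∧ l ≠ k := by decide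
  have hv : ∀ i j k, i ≠ j → i ≠ k → j ≠ k → ∀ s, γ i j s - z k ≠ 0 := by
    intro i j k hij hik hjk s
    obtain ⟨l, hl1, hl2, hl3⟩ := ex i j k
    rw [← h0 k l hl3.symm]
    exact sub_ne_zero.mpr (hd i j k l hij hl3.symm hik hl1.symm hjk hl2.symm s 0)
  have hz : ∀ i j, i ≠ j → z j - z i ≠ 0 := by
    intro i j hij
    obtain ⟨l, hl1, hl2, -⟩ := ex i j j
    have := hv j l i hl2.symm hij.symm hl1 0
    rwa [h0 j l hl2.symm] at this
  -- logarithms of directions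
  let ang : Fin 5 → Fin 5 → ℂ := fun u v =>
    if u < v then log (z v - z u) else log (z u - z v) + Real.pi * I
  have hang : ∀ u v, u ≠ v → exp (ang u v) = z v - z u := by
    intro u v huv
    simp only [ang]
    split_ifs with h
    · exact exp_log (hz u v huv)
    · rw [exp_add, exp_pi_mul_I, exp_log (hz v u huv.symm)]; ring
  have hanti : ∀ u v, u ≠ v → ang u v - ang v u = (eps u v : ℂ) * (Real.pi * I) := by
    intro u v huv
    simp only [ang, eps]
    rcases lt_or_gt_of_ne huv with h | h
    · simp [h, h.not_gt]
    · simp [h, h.not_gt]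
  -- winding logs
  have exW : ∀ v a b, ∃ L : ℝ → ℂ, (a ≠ b → a ≠ v → b ≠ v →
      Continuous L ∧ ∀ s, exp (L s) = γ a b s - z v) := by
    intro v a b
    by_cases h : a ≠ b ∧ a ≠ v ∧ b ≠ v
    · obtain ⟨L, hL, eL⟩ := exists_log_line (fun s => γ a b s - z v)
        ((hc a b h.1).sub continuous_const) (hv a b v h.1 h.2.1 h.2.2)
      exact ⟨L, fun _ _ _ => ⟨hL, eL⟩⟩
    · exact ⟨0, fun h1 h2 h3 => (h ⟨h1, h2, h3⟩).elim⟩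
  choose L hL using exW
  have exN : ∀ v a b, ∃ m : ℤ, (a ≠ b → a ≠ v → b ≠ v →
      L v a b 1 - L v a b 0 = ang v b - ang v a + m * (2 * Real.pi * I)) := by
    intro v a b
    by_cases h : a ≠ b ∧ a ≠ v ∧ b ≠ v
    · obtain ⟨h1', h2', h3'⟩ := h
      obtain ⟨-, eL⟩ := hL v a b h1' h2' h3'
      have : exp (L v a b 1 - L v a b 0 - (ang v b - ang v a)) = 1 := by
        rw [exp_sub, exp_sub, exp_sub, eL, eL, hang _ _ h2'.symm, hang _ _ h3'.symm, h0 _ _ h1',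
          h1 _ _ h1']
        exact div_self (div_ne_zero (hz _ _ h3'.symm) (hz _ _ h2'.symm))
      obtain ⟨m, hm⟩ := exp_eq_one_iff.mp this
      exact ⟨m, fun _ _ _ => by linear_combination hm⟩
    · exact ⟨0, fun h1 h2 h3 => (h ⟨h1, h2, h3⟩).elim⟩
  choose N hN using exN
  have key : ∀ a b c d, a ≠ b → c ≠ d → a ≠ c → a ≠ d → b ≠ c → b ≠ d →
      2 * (N c a b + N b c d - N d a b - N a c d) =
        - (eps c b + eps a c + eps b d + eps d a) := by
    intro a b c d hab hcd hac had hbc hbd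
    obtain ⟨c1, e1⟩ := hL c a b hab hac hbc
    obtain ⟨c2, e2⟩ := hL d a b hab had hbd
    obtain ⟨c3, e3⟩ := hL a c d hcd hac.symm had.symm
    obtain ⟨c4, e4⟩ := hL b c d hcd hbc.symm hbd.symm
    have sq := square_rel (γ a b) (γ c d) (hc _ _ hab) (hc _ _ hcd)
      (hd a b c d hab hcd hac had hbc hbd) (L c a b) (L d a b) (L a c d) (L b c d) c1 c2 c3 c4
      (by rwa [h0 _ _ hcd]) (by rwa [h1 _ _ hcd]) (by rwa [h0 _ _ hab]) (by rwa [h1 _ _ hab])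
    rw [hN c a b hab hac hbc, hN d a b hab had hbd, hN a c d hcd hac.symm had.symm,
      hN b c d hcd hbc.symm hbd.symm] at sq
    have a1 := hanti c b hbc.symm
    have a2 := hanti a c hac
    have a3 := hanti b d hbd
    have a4 := hanti d a had.symm
    have hpi : (Real.pi * I : ℂ) ≠ 0 := by simp [Real.pi_ne_zero]
    have : ((2 * (N c a b + N b c d - N d a b - N a c d) : ℤ) : ℂ) * (Real.pi * I) =
        ((- (eps c b + eps a c + eps b d + eps d a) : ℤ) : ℂ) * (Real.pi * I) := by
      push_cast
      linear_combination sq - a1 - a2 - a3 - a4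
    exact_mod_cast mul_right_cancel₀ hpi this
  have k1 := key 0 1 2 3 (by decide) (by decide) (by decide) (by decide) (by decide) (by decide)
  have k2 := key 0 2 1 3 (by decide) (by decide) (by decide) (by decide) (by decide) (by decide)
  have k3 := key 0 3 1 2 (by decide) (by decide) (by decide) (by decide) (by decide) (by decide)
  have k4 := key 0 1 2 4 (by decide) (by decide) (by decide) (by decide) (by decide) (by decide)
  have k5 := key 0 2 1 4 (by decide) (by decide) (by decide) (by decide) (by decide) (by decide)
  have k6 := key 0 4 1 2 (by decide) (by decide) (by decide) (by decide) (by decide) (by decide)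
  have k7 := key 0 1 3 4 (by decide) (by decide) (by decide) (by decide) (by decide) (by decide)
  have k8 := key 0 3 1 4 (by decide) (by decide) (by decide) (by decide) (by decide) (by decide)
  have k9 := key 0 4 1 3 (by decide) (by decide) (by decide) (by decide) (by decide) (by decide)
  have k10 := key 0 2 3 4 (by decide) (by decide) (by decide) (by decide) (by decide) (by decide)
  have k11 := key 0 3 2 4 (by decide) (by decide) (by decide) (by decide) (by decide) (by decide)
  have k12 := key 0 4 2 3 (by decide) (by decide) (by decide) (by decide) (by decide) (by decide)
  have k13 := key 1 2 3 4 (by decide) (by decide) (by decide) (by decide) (by decide) (by decide)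
  have k14 := key 1 3 2 4 (by decide) (by decide) (by decide) (by decide) (by decide) (by decide)
  have k15 := key 1 4 2 3 (by decide) (by decide) (by decide) (by decide) (by decide) (by decide)
  clear key
  have e1 : ∀ u v : Fin 5, u < v → eps u v = -1 := fun u v h => if_pos h
  have e2 : ∀ u v : Fin 5, v < u → eps u v = 1 := fun u v h => if_neg h.not_gt
  simp (disch := decide) only [e1, e2] at k1 k2 k3 k4 k5 k6 k7 k8 k9 k10 k11 k12 k13 k14 k15
  omega
end K5

/-- Clamp to the unit interval. -/
noncomputable def clamp (t : ℝ) : ℝ := max 0 (min 1 t)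

theorem clamp_mem (t : ℝ) : clamp t ∈ Icc (0 : ℝ) 1 :=
  ⟨le_max_left _ _, max_le zero_le_one (min_le_left _ _)⟩

theorem clamp_cont : Continuous clamp := by unfold clamp; fun_prop

theorem arcBody_disj {γ δ : ℝ → Pt} {a b c d : Pt} (hγ : IsArcFrom γ a b) (hδ : IsArcFrom δ c d)
    (hac : a ≠ c) (had : a ≠ d) (hbc : b ≠ c) (hbd : b ≠ d)
    (h1 : a ∉ arcInterior δ) (h2 : b ∉ arcInterior δ)
    (h3 : c ∉ arcInterior γ) (h4 : d ∉ arcInterior γ)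
    (h : arcInterior γ ∩ arcInterior δ = ∅) (s t : ℝ) (hs : s ∈ Icc (0 : ℝ) 1)
    (ht : t ∈ Icc (0 : ℝ) 1) : γ s ≠ δ t := by
  obtain ⟨-, -, g0, g1⟩ := hγ
  obtain ⟨-, -, d0, d1⟩ := hδ
  have cases01 : ∀ s : ℝ, s ∈ Icc (0 : ℝ) 1 → s = 0 ∨ s = 1 ∨ s ∈ Ioo (0 : ℝ) 1 := by
    intro s hs
    rcases eq_or_lt_of_le hs.1 with h | h
    · exact Or.inl h.symm
    · rcases eq_or_lt_of_le hs.2 with h' | h'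
      · exact Or.inr (Or.inl h')
      · exact Or.inr (Or.inr ⟨h, h'⟩)
  intro e
  rcases cases01 s hs with rfl | rfl | hs' <;> rcases cases01 t ht with rfl | rfl | ht'
  · exact hac (by rw [← g0, ← d0, e])
  · exact had (by rw [← g0, ← d1, e])
  · exact h1 ⟨t, ht', by rw [← g0, e]⟩
  · exact hbc (by rw [← g1, ← d0, e])
  · exact hbd (by rw [← g1, ← d1, e])
  · exact h2 ⟨t, ht', by rw [← g1, e]⟩
  · exact h3 ⟨s, hs', by rw [← d0, e]⟩
  · exact h4 ⟨s, hs', by rw [← d1, e]⟩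
  · have : γ s ∈ arcInterior γ ∩ arcInterior δ := ⟨⟨s, hs', rfl⟩, ⟨t, ht', e.symm⟩⟩
    rw [h] at this
    exact this

theorem no_K5_drawing (n : ℕ) (G : SimpleGraph (Fin n)) (S : Set (Fin n)) (P : Set Pt)
    (D : RawDrawing n) (hD : IsPlanarDrawingOn n G S P D) (f : Fin 5 → Fin n)
    (hf : Function.Injective f) (hS : ∀ i, f i ∈ S) (hA : ∀ i j, i ≠ j → G.Adj (f i) (f j)) :
    False := by
  let toC : Pt → ℂ := Complex.equivRealProdCLM.symm
  have tc : Continuous toC := Complex.equivRealProdCLM.symm.continuous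
  have tinj : Function.Injective toC := Complex.equivRealProdCLM.symm.injective
  have arc := fun i j (h : i ≠ j) => hD.arc (f i) (hS i) (f j) (hS j) (hA i j h)
  refine K5_aux (fun i => toC (D.pos (f i))) (fun i j t => toC (D.curve (f i) (f j) (clamp t)))
    ?_ ?_ ?_ ?_
  · intro i j h
    exact tc.comp ((arc i j h).1.comp_continuous clamp_cont clamp_mem)
  · intro i j h
    have : clamp 0 = 0 := by simp [clamp]
    simp only [this]
    rw [(arc i j h).2.2.1]
  · intro i j h
    have : clamp 1 = 1 := by simp [clamp]
    simp only [this]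
    rw [(arc i j h).2.2.2]
  · intro i j k l hij hkl hik hil hjk hjl s t e
    have pne : ∀ a b, a ≠ b → D.pos (f a) ≠ D.pos (f b) := fun a b hab e =>
      hab (hf (hD.pos_inj (hS a) (hS b) e))
    refine arcBody_disj (arc i j hij) (arc k l hkl) (pne _ _ hik) (pne _ _ hil) (pne _ _ hjk)
      (pne _ _ hjl)
      (hD.vertex_off_arc _ (hS k) _ (hS l) (hA k l hkl) _ (hS i))
      (hD.vertex_off_arc _ (hS k) _ (hS l) (hA k l hkl) _ (hS j))
      (hD.vertex_off_arc _ (hS i) _ (hS j) (hA i j hij) _ (hS k))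
      (hD.vertex_off_arc _ (hS i) _ (hS j) (hA i j hij) _ (hS l))
      (hD.no_cross _ (hS i) _ (hS j) _ (hS k) _ (hS l) (hA i j hij) (hA k l hkl) ?_)
      (clamp s) (clamp t) (clamp_mem s) (clamp_mem t) (tinj e)
    rw [Ne, Sym2.eq_iff]
    rintro (⟨h, -⟩ | ⟨h, -⟩)
    · exact hik (hf h)
    · exact hil (hf h)

theorem not_K5_of_realizable (n : ℕ) (G : SimpleGraph (Fin n)) (hvis : Visible n 5 G)
    (h : RerouteRealizable n 5 0 1 G) : ¬ ContainsK5 n G := by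
  rintro ⟨f, hf, hA⟩
  obtain ⟨P, -, ⟨R⟩⟩ := h
  obtain ⟨m, -, hm⟩ := Finset.exists_max_image Finset.univ (fun i => (f i).val)
    ⟨(0 : Fin 5), Finset.mem_univ _⟩
  have hi : (f m).val + 1 ≤ n := (f m).isLt
  refine no_K5_drawing n G _ _ _ (R.planar ((f m).val + 1) (by omega) hi) f hf ?_ hA
  intro i
  have h1 := hm i (Finset.mem_univ _)
  refine ⟨by omega, ?_⟩
  by_cases him : i = m
  · subst him; omega
  · have := hvis _ _ (hA i m him)
    omega
end GraphStories

namespace GraphStories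

section Push

/-- Affine function on the plane with coefficients `w`. -/
def lin (w : ℝ × ℝ × ℝ) (z : Pt) : ℝ := w.1 * z.1 + w.2.1 * z.2 + w.2.2

theorem lin_cont (w : ℝ × ℝ × ℝ) : Continuous (lin w) := by unfold lin; fun_prop

theorem lin_add_smul (w : ℝ × ℝ × ℝ) (z x x' : Pt) (t : ℝ) :
    lin w (z + t • (x' - x)) = lin w z + t * (lin w x' - lin w x) := by
  simp [lin]; ring

theorem lin_comb (w : ℝ × ℝ × ℝ) (y x : Pt) (s : ℝ) :
    lin w ((1 - s) • y + s • x) = (1 - s) * lin w y + s * lin w x := by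
  simp [lin]; ring

/-- Pyramid function with apex at `x` over the region where `w1, w2, w3` are positive. -/
noncomputable def pyr (w1 w2 w3 : ℝ × ℝ × ℝ) (x z : Pt) : ℝ :=
  max 0 (min (lin w1 z / lin w1 x) (min (lin w2 z / lin w2 x) (lin w3 z / lin w3 x)))

theorem pyr_cont (w1 w2 w3 : ℝ × ℝ × ℝ) (x : Pt) : Continuous (pyr w1 w2 w3 x) := by
  have h1 := lin_cont w1
  have h2 := lin_cont w2
  have h3 := lin_cont w3
  unfold pyr
  fun_prop

theorem pyr_eq_of {w1 w2 w3 : ℝ × ℝ × ℝ} {x z : Pt} {t : ℝ}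
    (p1 : 0 < lin w1 x) (p2 : 0 < lin w2 x) (p3 : 0 < lin w3 x) (ht : 0 ≤ t)
    (h1 : t * lin w1 x ≤ lin w1 z) (h2 : t * lin w2 x ≤ lin w2 z) (h3 : t * lin w3 x ≤ lin w3 z)
    (h : lin w1 z = t * lin w1 x ∨ lin w2 z = t * lin w2 x ∨ lin w3 z = t * lin w3 x) :
    pyr w1 w2 w3 x z = t := by
  unfold pyr
  rw [← le_div_iff₀ p1] at h1
  rw [← le_div_iff₀ p2] at h2
  rw [← le_div_iff₀ p3] at h3
  rw [← div_eq_iff p1.ne', ← div_eq_iff p2.ne', ← div_eq_iff p3.ne'] at h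
  apply le_antisymm
  · apply max_le ht
    rcases h with h | h | h <;> simp [h]
  · apply le_max_of_le_right
    simp [h1, h2, h3]

theorem pyr_zero_of {w1 w2 w3 : ℝ × ℝ × ℝ} {x z : Pt}
    (p1 : 0 < lin w1 x) (p2 : 0 < lin w2 x) (p3 : 0 < lin w3 x)
    (h : lin w1 z ≤ 0 ∨ lin w2 z ≤ 0 ∨ lin w3 z ≤ 0) : pyr w1 w2 w3 x z = 0 := by
  unfold pyr
  apply max_eq_left
  rcases h with h | h | h
  · exact (min_le_left _ _).trans (div_nonpos_of_nonpos_of_nonneg h p1.le)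
  · exact (min_le_right _ _).trans ((min_le_left _ _).trans
      (div_nonpos_of_nonpos_of_nonneg h p2.le))
  · exact (min_le_right _ _).trans ((min_le_right _ _).trans
      (div_nonpos_of_nonpos_of_nonneg h p3.le))

theorem pyr_pos_of {w1 w2 w3 : ℝ × ℝ × ℝ} {x z : Pt}
    (p1 : 0 < lin w1 x) (p2 : 0 < lin w2 x) (p3 : 0 < lin w3 x)
    (h1 : 0 < lin w1 z) (h2 : 0 < lin w2 z) (h3 : 0 < lin w3 z) : 0 < pyr w1 w2 w3 x z := by
  unfold pyr
  apply lt_max_of_lt_right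
  simp only [lt_min_iff]
  exact ⟨div_pos h1 p1, div_pos h2 p2, div_pos h3 p3⟩

theorem pyr_spec {w1 w2 w3 : ℝ × ℝ × ℝ} {x z : Pt}
    (p1 : 0 < lin w1 x) (p2 : 0 < lin w2 x) (p3 : 0 < lin w3 x)
    (h1 : 0 < lin w1 z) (h2 : 0 < lin w2 z) (h3 : 0 < lin w3 z) :
    pyr w1 w2 w3 x z * lin w1 x ≤ lin w1 z ∧ pyr w1 w2 w3 x z * lin w2 x ≤ lin w2 z ∧
    pyr w1 w2 w3 x z * lin w3 x ≤ lin w3 z ∧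
    (lin w1 z = pyr w1 w2 w3 x z * lin w1 x ∨ lin w2 z = pyr w1 w2 w3 x z * lin w2 x ∨
      lin w3 z = pyr w1 w2 w3 x z * lin w3 x) := by
  have e : pyr w1 w2 w3 x z = min (lin w1 z / lin w1 x)
      (min (lin w2 z / lin w2 x) (lin w3 z / lin w3 x)) := by
    unfold pyr
    apply max_eq_right
    simp only [le_min_iff]
    exact ⟨(div_pos h1 p1).le, (div_pos h2 p2).le, (div_pos h3 p3).le⟩
  rw [e, ← le_div_iff₀ p1, ← le_div_iff₀ p2, ← le_div_iff₀ p3, ← div_eq_iff p1.ne',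
    ← div_eq_iff p2.ne', ← div_eq_iff p3.ne']
  refine ⟨min_le_left _ _, (min_le_right _ _).trans (min_le_left _ _),
    (min_le_right _ _).trans (min_le_right _ _), ?_⟩
  rcases min_choice (lin w1 z / lin w1 x) (min (lin w2 z / lin w2 x) (lin w3 z / lin w3 x)) with h | h
  · exact Or.inl h.symm
  · rcases min_choice (lin w2 z / lin w2 x) (lin w3 z / lin w3 x) with h' | h'
    · exact Or.inr (Or.inl (by rw [h, h']))
    · exact Or.inr (Or.inr (by rw [h, h']))

theorem pyr_inv {w1 w2 w3 : ℝ × ℝ × ℝ} {x x' : Pt}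
    (p1 : 0 < lin w1 x) (p2 : 0 < lin w2 x) (p3 : 0 < lin w3 x)
    (p1' : 0 < lin w1 x') (p2' : 0 < lin w2 x') (p3' : 0 < lin w3 x') (z : Pt) :
    pyr w1 w2 w3 x' (z + pyr w1 w2 w3 x z • (x' - x)) = pyr w1 w2 w3 x z := by
  by_cases h : lin w1 z ≤ 0 ∨ lin w2 z ≤ 0 ∨ lin w3 z ≤ 0
  · rw [pyr_zero_of p1 p2 p3 h, zero_smul, add_zero]
    exact pyr_zero_of p1' p2' p3' h
  · push Not at h
    obtain ⟨a1, a2, a3, a4⟩ := pyr_spec p1 p2 p3 h.1 h.2.1 h.2.2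
    have hp := pyr_pos_of p1 p2 p3 h.1 h.2.1 h.2.2
    refine pyr_eq_of p1' p2' p3' hp.le ?_ ?_ ?_ ?_
    · rw [lin_add_smul]; linarith
    · rw [lin_add_smul]; linarith
    · rw [lin_add_smul]; linarith
    · simp only [lin_add_smul]
      rcases a4 with a | a | a
      · left; linarith
      · right; left; linarith
      · right; right; linarith

/-- Push the point `x` to `x'` inside the region where `w1, w2, w3` are positive. -/
noncomputable def push (w1 w2 w3 : ℝ × ℝ × ℝ) (x x' : Pt)
    (p1 : 0 < lin w1 x) (p2 : 0 < lin w2 x) (p3 : 0 < lin w3 x)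
    (p1' : 0 < lin w1 x') (p2' : 0 < lin w2 x') (p3' : 0 < lin w3 x') : Pt ≃ₜ Pt where
  toFun z := z + pyr w1 w2 w3 x z • (x' - x)
  invFun z := z + pyr w1 w2 w3 x' z • (x - x')
  left_inv z := by
    simp only [pyr_inv p1 p2 p3 p1' p2' p3']
    rw [add_assoc, ← smul_add]; simp
  right_inv z := by
    simp only [pyr_inv p1' p2' p3' p1 p2 p3]
    rw [add_assoc, ← smul_add]; simp
  continuous_toFun := by
    have := pyr_cont w1 w2 w3 x
    fun_prop
  continuous_invFun := by
    have := pyr_cont w1 w2 w3 x'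
    fun_prop

theorem exists_push (w1 w2 w3 : ℝ × ℝ × ℝ) (x x' : Pt)
    (p1 : 0 < lin w1 x) (p2 : 0 < lin w2 x) (p3 : 0 < lin w3 x)
    (p1' : 0 < lin w1 x') (p2' : 0 < lin w2 x') (p3' : 0 < lin w3 x') :
    ∃ (Ψ : Pt ≃ₜ Pt) (g : Pt → ℝ), (∀ z, Ψ z = z + g z • (x' - x)) ∧
      (∀ z, (lin w1 z ≤ 0 ∨ lin w2 z ≤ 0 ∨ lin w3 z ≤ 0) → g z = 0) ∧
      (∀ z, 0 < lin w1 z → 0 < lin w2 z → 0 < lin w3 z → 0 < g z) ∧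
      (∀ y, ∀ s : ℝ, 0 ≤ s → s ≤ 1 → 0 ≤ lin w1 y → 0 ≤ lin w2 y → 0 ≤ lin w3 y →
        (lin w1 y = 0 ∨ lin w2 y = 0 ∨ lin w3 y = 0) →
        Ψ ((1 - s) • y + s • x) = (1 - s) • y + s • x') ∧ Ψ x = x' := by
  have cone : ∀ y, ∀ s : ℝ, 0 ≤ s → s ≤ 1 → 0 ≤ lin w1 y → 0 ≤ lin w2 y → 0 ≤ lin w3 y →
        (lin w1 y = 0 ∨ lin w2 y = 0 ∨ lin w3 y = 0 ∨ s = 1) →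
        pyr w1 w2 w3 x ((1 - s) • y + s • x) = s := by
    intro y s s0 s1 h1 h2 h3 h
    have hs : 0 ≤ 1 - s := by linarith
    refine pyr_eq_of p1 p2 p3 s0 ?_ ?_ ?_ ?_
    · rw [lin_comb]; have := mul_nonneg hs h1; linarith
    · rw [lin_comb]; have := mul_nonneg hs h2; linarith
    · rw [lin_comb]; have := mul_nonneg hs h3; linarith
    · simp only [lin_comb]
      rcases h with h | h | h | h
      · left; rw [h]; ring
      · right; left; rw [h]; ring
      · right; right; rw [h]; ring
      · left; rw [h]; ring
  refine ⟨push w1 w2 w3 x x' p1 p2 p3 p1' p2' p3', pyr w1 w2 w3 x, fun z => rfl,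
    fun z h => pyr_zero_of p1 p2 p3 h, fun z => pyr_pos_of p1 p2 p3, ?_, ?_⟩
  · intro y s s0 s1 h1 h2 h3 h
    change (1 - s) • y + s • x + pyr w1 w2 w3 x ((1 - s) • y + s • x) • (x' - x) = _
    rw [cone y s s0 s1 h1 h2 h3 (by tauto), smul_sub]
    abel
  · change x + pyr w1 w2 w3 x x • (x' - x) = _
    have := cone x 1 zero_le_one le_rfl p1.le p2.le p3.le (by tauto)
    simp only [sub_self, zero_smul, one_smul, zero_add] at this
    rw [this]; simp

theorem seg_img (Ψ : Pt ≃ₜ Pt) (x y x' y' : Pt)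
    (h : ∀ t : ℝ, 0 ≤ t → t ≤ 1 → Ψ ((1 - t) • x + t • y) = (1 - t) • x' + t • y') :
    Ψ '' segment ℝ x y = segment ℝ x' y' := by
  rw [segment_eq_image, segment_eq_image, image_image]
  apply image_congr
  intro t ht
  exact h t ht.1 ht.2

theorem seg_lin_nonpos (w : ℝ × ℝ × ℝ) (x y z : Pt) (hx : lin w x ≤ 0) (hy : lin w y ≤ 0)
    (hz : z ∈ segment ℝ x y) : lin w z ≤ 0 := by
  rw [segment_eq_image] at hz
  obtain ⟨t, ht, rfl⟩ := hz
  simp only [lin_comb]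
  have h1 : 0 ≤ 1 - t := by linarith [ht.2]
  nlinarith [ht.1, mul_nonneg h1 (neg_nonneg.mpr hx), mul_nonneg ht.1 (neg_nonneg.mpr hy)]

theorem seg_img_fix (Ψ : Pt ≃ₜ Pt) (x y : Pt) (h : ∀ z ∈ segment ℝ x y, Ψ z = z) :
    Ψ '' segment ℝ x y = segment ℝ x y := by
  rw [image_congr h]; simp

end Push

section Canon

/-- A configuration given by its five points. -/
def cfg (u a b c p : Pt) : Fin 5 → Pt := ![u, a, b, c, p]

theorem cfg_0 (u a b c p : Pt) : cfg u a b c p 0 = u := rfl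
theorem cfg_1 (u a b c p : Pt) : cfg u a b c p 1 = a := rfl
theorem cfg_2 (u a b c p : Pt) : cfg u a b c p 2 = b := rfl
theorem cfg_3 (u a b c p : Pt) : cfg u a b c p 3 = c := rfl
theorem cfg_4 (u a b c p : Pt) : cfg u a b c p 4 = p := rfl

theorem forall5 (R : Fin 5 → Prop) (h0 : R 0) (h1 : R 1) (h2 : R 2) (h3 : R 3) (h4 : R 4) :
    ∀ k, R k := by
  intro k
  fin_cases k <;> assumption

/-- The canonical configuration: outer apex, the two outer triangle vertices, the inner triangle
vertex, the inner apex. -/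
def X0 : Fin 5 → Pt := cfg (0, 6) (0, 0) (6, 0) (2, 2) (3, 1)

theorem X0_0 : X0 0 = (0, 6) := rfl
theorem X0_1 : X0 1 = (0, 0) := rfl
theorem X0_2 : X0 2 = (6, 0) := rfl
theorem X0_3 : X0 3 = (2, 2) := rfl
theorem X0_4 : X0 4 = (3, 1) := rfl

/-- Segments of two configurations correspond, but for the pair `0, 4`. -/
def CEquiv (X Y : Fin 5 → Pt) : Prop :=
  ∃ Ψ : Pt ≃ₜ Pt, (∀ k, Ψ (X k) = Y k) ∧ ∀ i j, i ≠ j → s(i, j) ≠ s(0, 4) →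
    Ψ '' segment ℝ (X i) (X j) = segment ℝ (Y i) (Y j)

theorem CEquiv.trans {X Y Z : Fin 5 → Pt} (h : CEquiv X Y) (h' : CEquiv Y Z) : CEquiv X Z := by
  obtain ⟨Ψ, a, b⟩ := h
  obtain ⟨Ψ', a', b'⟩ := h'
  refine ⟨Ψ.trans Ψ', fun k => by simp [a, a'], fun i j hij hM => ?_⟩
  rw [← b' i j hij hM, ← b i j hij hM, image_image]
  rfl

theorem edges9 (R : Fin 5 → Fin 5 → Prop) (hs : ∀ i j, R i j → R j i)
    (h01 : R 0 1) (h02 : R 0 2) (h03 : R 0 3) (h12 : R 1 2) (h13 : R 1 3) (h14 : R 1 4)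
    (h23 : R 2 3) (h24 : R 2 4) (h34 : R 3 4) :
    ∀ i j, i ≠ j → s(i, j) ≠ s(0, 4) → R i j := by
  intro i j
  fin_cases i <;> fin_cases j <;> intro h1 h2 <;>
    first
    | exact absurd rfl h1
    | exact absurd (by decide) h2
    | assumption
    | (apply hs; assumption)

/-- General configurations of the combinatorial type of `X0`. -/
def Config (X : Fin 5 → Pt) : Prop :=
  (((X 2).1 - (X 1).1) * ((X 0).2 - (X 1).2) - ((X 2).2 - (X 1).2) * ((X 0).1 - (X 1).1) ≠ 0) ∧
  (∃ a b c : ℝ, 0 < a ∧ 0 < b ∧ 0 < c ∧ a + b + c = 1 ∧ X 3 = a • X 0 + b • X 1 + c • X 2) ∧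
  (∃ a b c : ℝ, 0 < a ∧ 0 < b ∧ 0 < c ∧ a + b + c = 1 ∧ X 4 = a • X 1 + b • X 2 + c • X 3)

theorem affine_homeo (U A B : Pt)
    (h : (B.1 - A.1) * (U.2 - A.2) - (B.2 - A.2) * (U.1 - A.1) ≠ 0) :
    ∃ Ψ : Pt ≃ₜ Pt, ∀ z : Pt, Ψ z = A + (z.1 / 6) • (B - A) + (z.2 / 6) • (U - A) := by
  set d := (B.1 - A.1) * (U.2 - A.2) - (B.2 - A.2) * (U.1 - A.1) with hd
  refine ⟨⟨⟨fun z => A + (z.1 / 6) • (B - A) + (z.2 / 6) • (U - A),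
    fun z => (6 * ((z.1 - A.1) * (U.2 - A.2) - (z.2 - A.2) * (U.1 - A.1)) / d,
      6 * ((B.1 - A.1) * (z.2 - A.2) - (B.2 - A.2) * (z.1 - A.1)) / d), ?_, ?_⟩, ?_, ?_⟩, ?_⟩
  · intro z
    ext
    · simp; field_simp; rw [hd]; ring
    · simp; field_simp; rw [hd]; ring
  · intro z
    ext
    · simp; field_simp; rw [hd]; ring
    · simp; field_simp; rw [hd]; ring
  · fun_prop
  · fun_prop
  · intro z; rfl

theorem stageP (a b c : ℝ) (ha : 0 < a) (hb : 0 < b) (hc : 0 < c) (habc : a + b + c = 1) :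
    CEquiv X0 (cfg (0, 6) (0, 0) (6, 0) (2, 2) (6 * b + 2 * c, 2 * c)) := by
  obtain ⟨Ψ, g, h1, h2, -, h4, h5⟩ := exists_push (0, 1, 0) (1, -1, 0) (-1, -2, 6) (3, 1)
    (6 * b + 2 * c, 2 * c) (by norm_num [lin, X0_0, X0_1, X0_2, X0_3, X0_4, cfg_0, cfg_1, cfg_2, cfg_3, cfg_4]) (by norm_num [lin, X0_0, X0_1, X0_2, X0_3, X0_4, cfg_0, cfg_1, cfg_2, cfg_3, cfg_4]) (by norm_num [lin, X0_0, X0_1, X0_2, X0_3, X0_4, cfg_0, cfg_1, cfg_2, cfg_3, cfg_4])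
    (by simp [lin]; linarith) (by simp [lin]; linarith) (by simp [lin]; nlinarith)
  have fix : ∀ z, (lin (0, 1, 0) z ≤ 0 ∨ lin (1, -1, 0) z ≤ 0 ∨ lin (-1, -2, 6) z ≤ 0) →
      Ψ z = z := by
    intro z hz; rw [h1, h2 z hz]; simp
  refine ⟨Ψ, ?_, ?_⟩
  · apply forall5
    · exact fix _ (by norm_num [lin, X0_0, X0_1, X0_2, X0_3, X0_4, cfg_0, cfg_1, cfg_2, cfg_3, cfg_4])
    · exact fix _ (by norm_num [lin, X0_0, X0_1, X0_2, X0_3, X0_4, cfg_0, cfg_1, cfg_2, cfg_3, cfg_4])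
    · exact fix _ (by norm_num [lin, X0_0, X0_1, X0_2, X0_3, X0_4, cfg_0, cfg_1, cfg_2, cfg_3, cfg_4])
    · exact fix _ (by norm_num [lin, X0_0, X0_1, X0_2, X0_3, X0_4, cfg_0, cfg_1, cfg_2, cfg_3, cfg_4])
    · exact h5
  · apply edges9
    · intro i j h; rw [segment_symm ℝ (X0 j), h, segment_symm]
    · exact seg_img_fix _ _ _ fun z hz => fix z (Or.inr (Or.inl
        (seg_lin_nonpos _ _ _ _ (by norm_num [lin, X0_0, X0_1, X0_2, X0_3, X0_4, cfg_0, cfg_1, cfg_2, cfg_3, cfg_4]) (by norm_num [lin, X0_0, X0_1, X0_2, X0_3, X0_4, cfg_0, cfg_1, cfg_2, cfg_3, cfg_4]) hz)))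
    · exact seg_img_fix _ _ _ fun z hz => fix z (Or.inr (Or.inr
        (seg_lin_nonpos _ _ _ _ (by norm_num [lin, X0_0, X0_1, X0_2, X0_3, X0_4, cfg_0, cfg_1, cfg_2, cfg_3, cfg_4]) (by norm_num [lin, X0_0, X0_1, X0_2, X0_3, X0_4, cfg_0, cfg_1, cfg_2, cfg_3, cfg_4]) hz)))
    · exact seg_img_fix _ _ _ fun z hz => fix z (Or.inr (Or.inr
        (seg_lin_nonpos _ _ _ _ (by norm_num [lin, X0_0, X0_1, X0_2, X0_3, X0_4, cfg_0, cfg_1, cfg_2, cfg_3, cfg_4]) (by norm_num [lin, X0_0, X0_1, X0_2, X0_3, X0_4, cfg_0, cfg_1, cfg_2, cfg_3, cfg_4]) hz)))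
    · exact seg_img_fix _ _ _ fun z hz => fix z (Or.inl
        (seg_lin_nonpos _ _ _ _ (by norm_num [lin, X0_0, X0_1, X0_2, X0_3, X0_4, cfg_0, cfg_1, cfg_2, cfg_3, cfg_4]) (by norm_num [lin, X0_0, X0_1, X0_2, X0_3, X0_4, cfg_0, cfg_1, cfg_2, cfg_3, cfg_4]) hz))
    · exact seg_img_fix _ _ _ fun z hz => fix z (Or.inr (Or.inl
        (seg_lin_nonpos _ _ _ _ (by norm_num [lin, X0_0, X0_1, X0_2, X0_3, X0_4, cfg_0, cfg_1, cfg_2, cfg_3, cfg_4]) (by norm_num [lin, X0_0, X0_1, X0_2, X0_3, X0_4, cfg_0, cfg_1, cfg_2, cfg_3, cfg_4]) hz)))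
    · exact seg_img _ _ _ _ _ fun t t0 t1 => h4 _ t t0 t1 (by norm_num [lin, X0_0, X0_1, X0_2, X0_3, X0_4, cfg_0, cfg_1, cfg_2, cfg_3, cfg_4])
        (by norm_num [lin, X0_0, X0_1, X0_2, X0_3, X0_4, cfg_0, cfg_1, cfg_2, cfg_3, cfg_4]) (by norm_num [lin, X0_0, X0_1, X0_2, X0_3, X0_4, cfg_0, cfg_1, cfg_2, cfg_3, cfg_4]) (by norm_num [lin, X0_0, X0_1, X0_2, X0_3, X0_4, cfg_0, cfg_1, cfg_2, cfg_3, cfg_4])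
    · exact seg_img_fix _ _ _ fun z hz => fix z (Or.inr (Or.inr
        (seg_lin_nonpos _ _ _ _ (by norm_num [lin, X0_0, X0_1, X0_2, X0_3, X0_4, cfg_0, cfg_1, cfg_2, cfg_3, cfg_4]) (by norm_num [lin, X0_0, X0_1, X0_2, X0_3, X0_4, cfg_0, cfg_1, cfg_2, cfg_3, cfg_4]) hz)))
    · exact seg_img _ _ _ _ _ fun t t0 t1 => h4 _ t t0 t1 (by norm_num [lin, X0_0, X0_1, X0_2, X0_3, X0_4, cfg_0, cfg_1, cfg_2, cfg_3, cfg_4])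
        (by norm_num [lin, X0_0, X0_1, X0_2, X0_3, X0_4, cfg_0, cfg_1, cfg_2, cfg_3, cfg_4]) (by norm_num [lin, X0_0, X0_1, X0_2, X0_3, X0_4, cfg_0, cfg_1, cfg_2, cfg_3, cfg_4]) (by norm_num [lin, X0_0, X0_1, X0_2, X0_3, X0_4, cfg_0, cfg_1, cfg_2, cfg_3, cfg_4])
    · exact seg_img _ _ _ _ _ fun t t0 t1 => h4 _ t t0 t1 (by norm_num [lin, X0_0, X0_1, X0_2, X0_3, X0_4, cfg_0, cfg_1, cfg_2, cfg_3, cfg_4])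
        (by norm_num [lin, X0_0, X0_1, X0_2, X0_3, X0_4, cfg_0, cfg_1, cfg_2, cfg_3, cfg_4]) (by norm_num [lin, X0_0, X0_1, X0_2, X0_3, X0_4, cfg_0, cfg_1, cfg_2, cfg_3, cfg_4]) (by norm_num [lin, X0_0, X0_1, X0_2, X0_3, X0_4, cfg_0, cfg_1, cfg_2, cfg_3, cfg_4])

theorem stageC (a b c : ℝ) (ha : 0 < a) (hb : 0 < b) (hc : 0 < c) (habc : a + b + c = 1)
    (x y : ℝ) (hx : 0 < x) (hy : 0 < y) (hxy : x + y < 6) :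
    CEquiv (cfg (0, 6) (0, 0) (6, 0) (2, 2) (6 * b + 2 * c, 2 * c))
      (cfg (0, 6) (0, 0) (6, 0) (x, y) (6 * b + c * x, c * y)) := by
  obtain ⟨Ψ, g, h1, h2, -, h4, h5⟩ := exists_push (1, 0, 0) (0, 1, 0) (-1, -1, 6) (2, 2)
    (x, y) (by norm_num [lin, X0_0, X0_1, X0_2, X0_3, X0_4, cfg_0, cfg_1, cfg_2, cfg_3, cfg_4]) (by norm_num [lin, X0_0, X0_1, X0_2, X0_3, X0_4, cfg_0, cfg_1, cfg_2, cfg_3, cfg_4]) (by norm_num [lin, X0_0, X0_1, X0_2, X0_3, X0_4, cfg_0, cfg_1, cfg_2, cfg_3, cfg_4])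
    (by simpa [lin]) (by simpa [lin]) (by simp [lin]; linarith)
  have fix : ∀ z, (lin (1, 0, 0) z ≤ 0 ∨ lin (0, 1, 0) z ≤ 0 ∨ lin (-1, -1, 6) z ≤ 0) →
      Ψ z = z := by
    intro z hz; rw [h1, h2 z hz]; simp
  -- affine on the bottom triangle
  have bot : ∀ a b c : ℝ, 0 ≤ a → 0 ≤ b → 0 ≤ c → a + b + c = 1 →
      Ψ (6 * b + 2 * c, 2 * c) = (6 * b + c * x, c * y) := by
    intro a b c ha hb hc h
    rcases eq_or_lt_of_le (show c ≤ 1 by linarith) with rfl | hc1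
    · have : b = 0 := by linarith
      subst this
      simpa using h5
    · have hne : 1 - c ≠ 0 := by linarith
      have hb0 : 0 ≤ 6 * b / (1 - c) := div_nonneg (by linarith) (by linarith)
      have hb6 : 6 * b / (1 - c) ≤ 6 := by
        rw [div_le_iff₀ (by linarith)]; linarith
      have := h4 (6 * b / (1 - c), 0) c hc hc1.le (by simpa [lin] using hb0) (by simp [lin])
        (by simp [lin]; linarith) (by simp [lin])
      have e1 : (1 - c) • ((6 * b / (1 - c), 0) : Pt) + c • ((2, 2) : Pt)
          = (6 * b + 2 * c, 2 * c) := by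
        ext
        · simp; field_simp
        · simp; ring
      have e2 : (1 - c) • ((6 * b / (1 - c), 0) : Pt) + c • ((x, y) : Pt)
          = (6 * b + c * x, c * y) := by
        ext
        · simp; field_simp
        · simp
      rw [e1, e2] at this
      exact this
  refine ⟨Ψ, ?_, ?_⟩
  · apply forall5
    · exact fix _ (by norm_num [lin, X0_0, X0_1, X0_2, X0_3, X0_4, cfg_0, cfg_1, cfg_2, cfg_3, cfg_4])
    · exact fix _ (by norm_num [lin, X0_0, X0_1, X0_2, X0_3, X0_4, cfg_0, cfg_1, cfg_2, cfg_3, cfg_4])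
    · exact fix _ (by norm_num [lin, X0_0, X0_1, X0_2, X0_3, X0_4, cfg_0, cfg_1, cfg_2, cfg_3, cfg_4])
    · exact h5
    · exact bot a b c ha.le hb.le hc.le habc
  · apply edges9
    · intro i j h; rw [segment_symm ℝ (cfg _ _ _ _ _ j), h, segment_symm]
    · exact seg_img_fix _ _ _ fun z hz => fix z (Or.inl
        (seg_lin_nonpos _ _ _ _ (by norm_num [lin, X0_0, X0_1, X0_2, X0_3, X0_4, cfg_0, cfg_1, cfg_2, cfg_3, cfg_4]) (by norm_num [lin, X0_0, X0_1, X0_2, X0_3, X0_4, cfg_0, cfg_1, cfg_2, cfg_3, cfg_4]) hz))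
    · exact seg_img_fix _ _ _ fun z hz => fix z (Or.inr (Or.inr
        (seg_lin_nonpos _ _ _ _ (by norm_num [lin, X0_0, X0_1, X0_2, X0_3, X0_4, cfg_0, cfg_1, cfg_2, cfg_3, cfg_4]) (by norm_num [lin, X0_0, X0_1, X0_2, X0_3, X0_4, cfg_0, cfg_1, cfg_2, cfg_3, cfg_4]) hz)))
    · exact seg_img _ _ _ _ _ fun t t0 t1 => h4 _ t t0 t1 (by norm_num [lin, X0_0, X0_1, X0_2, X0_3, X0_4, cfg_0, cfg_1, cfg_2, cfg_3, cfg_4])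
        (by norm_num [lin, X0_0, X0_1, X0_2, X0_3, X0_4, cfg_0, cfg_1, cfg_2, cfg_3, cfg_4]) (by norm_num [lin, X0_0, X0_1, X0_2, X0_3, X0_4, cfg_0, cfg_1, cfg_2, cfg_3, cfg_4]) (by norm_num [lin, X0_0, X0_1, X0_2, X0_3, X0_4, cfg_0, cfg_1, cfg_2, cfg_3, cfg_4])
    · exact seg_img_fix _ _ _ fun z hz => fix z (Or.inr (Or.inl
        (seg_lin_nonpos _ _ _ _ (by norm_num [lin, X0_0, X0_1, X0_2, X0_3, X0_4, cfg_0, cfg_1, cfg_2, cfg_3, cfg_4]) (by norm_num [lin, X0_0, X0_1, X0_2, X0_3, X0_4, cfg_0, cfg_1, cfg_2, cfg_3, cfg_4]) hz)))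
    · exact seg_img _ _ _ _ _ fun t t0 t1 => h4 _ t t0 t1 (by norm_num [lin, X0_0, X0_1, X0_2, X0_3, X0_4, cfg_0, cfg_1, cfg_2, cfg_3, cfg_4])
        (by norm_num [lin, X0_0, X0_1, X0_2, X0_3, X0_4, cfg_0, cfg_1, cfg_2, cfg_3, cfg_4]) (by norm_num [lin, X0_0, X0_1, X0_2, X0_3, X0_4, cfg_0, cfg_1, cfg_2, cfg_3, cfg_4]) (by norm_num [lin, X0_0, X0_1, X0_2, X0_3, X0_4, cfg_0, cfg_1, cfg_2, cfg_3, cfg_4])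
    · refine seg_img _ _ _ _ _ fun t t0 t1 => ?_
      have := bot (1 - t + t * a) (t * b) (t * c) (by nlinarith) (by positivity) (by positivity)
        (by linear_combination t * habc)
      simp only [cfg_1, cfg_2, cfg_3, cfg_4]
      refine (congrArg Ψ ?_).trans (this.trans ?_)
      · ext <;> simp <;> ring
      · ext <;> simp <;> ring
    · exact seg_img _ _ _ _ _ fun t t0 t1 => h4 _ t t0 t1 (by norm_num [lin, X0_0, X0_1, X0_2, X0_3, X0_4, cfg_0, cfg_1, cfg_2, cfg_3, cfg_4])
        (by norm_num [lin, X0_0, X0_1, X0_2, X0_3, X0_4, cfg_0, cfg_1, cfg_2, cfg_3, cfg_4]) (by norm_num [lin, X0_0, X0_1, X0_2, X0_3, X0_4, cfg_0, cfg_1, cfg_2, cfg_3, cfg_4]) (by norm_num [lin, X0_0, X0_1, X0_2, X0_3, X0_4, cfg_0, cfg_1, cfg_2, cfg_3, cfg_4])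
    · refine seg_img _ _ _ _ _ fun t t0 t1 => ?_
      have := bot (t * a) (1 - t + t * b) (t * c) (by positivity) (by nlinarith) (by positivity)
        (by linear_combination t * habc)
      simp only [cfg_1, cfg_2, cfg_3, cfg_4]
      refine (congrArg Ψ ?_).trans (this.trans ?_)
      · ext <;> simp <;> ring
      · ext <;> simp <;> ring
    · refine seg_img _ _ _ _ _ fun t t0 t1 => ?_
      have := bot (t * a) (t * b) (1 - t + t * c) (by positivity) (by positivity) (by nlinarith)
        (by linear_combination t * habc)
      simp only [cfg_1, cfg_2, cfg_3, cfg_4]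
      refine (congrArg Ψ ?_).trans (this.trans ?_)
      · ext <;> simp <;> ring
      · ext <;> simp <;> ring

theorem canon (X : Fin 5 → Pt) (hX : Config X) : CEquiv X0 X := by
  obtain ⟨hdet, ⟨a, b, c, ha, hb, hc, habc, hC⟩, ⟨a', b', c', ha', hb', hc', habc', hP⟩⟩ := hX
  refine (stageP a' b' c' ha' hb' hc' habc').trans
    ((stageC a' b' c' ha' hb' hc' habc' (6 * c) (6 * a) (by linarith) (by linarith)
      (by linarith)).trans ?_)
  obtain ⟨Ψ, hΨ⟩ := affine_homeo (X 0) (X 1) (X 2) hdet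
  have hk : ∀ k, Ψ (cfg (0, 6) (0, 0) (6, 0) (6 * c, 6 * a)
      (6 * b' + c' * (6 * c), c' * (6 * a)) k) = X k := by
    have hb1 : b = 1 - a - c := by linarith
    have ha1 : a' = 1 - b' - c' := by linarith
    subst hb1 ha1
    apply forall5
    · simp [hΨ, cfg_0, cfg_1, cfg_2]
    · simp [hΨ, cfg_0, cfg_1, cfg_2]
    · simp [hΨ, cfg_0, cfg_1, cfg_2]
    · simp only [hΨ, cfg_3, cfg_4]
      change _ = X 3
      rw [hC]
      ext <;> simp <;> ring
    · simp only [hΨ, cfg_3, cfg_4]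
      change _ = X 4
      rw [hP, hC]
      ext <;> simp <;> ring
  refine ⟨Ψ, hk, fun i j _ _ => ?_⟩
  refine seg_img _ _ _ _ _ fun t _ _ => ?_
  rw [← hk i, ← hk j]
  simp only [hΨ]
  ext <;> simp <;> ring

end Canon
end GraphStories

namespace GraphStories

section Moves

/-- The straight line parametrization. -/
noncomputable def line (x y : Pt) (t : ℝ) : Pt := (1 - t) • x + t • y

theorem line_image (x y : Pt) : line x y '' Icc (0 : ℝ) 1 = segment ℝ x y := by
  rw [segment_eq_image]; rfl

theorem line_inj {x y : Pt} (h : x ≠ y) : Function.Injective (line x y) := by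
  intro s t hst
  unfold line at hst
  have h1 : (s - t) • (y - x) = 0 := by
    have : (s - t) • (y - x) = ((1 - s) • x + s • y) - ((1 - t) • x + t • y) := by module
    rw [this, hst, sub_self]
  rcases smul_eq_zero.mp h1 with h2 | h2
  · linarith
  · exact absurd (sub_eq_zero.mp h2).symm h

theorem line_cont (x y : Pt) : Continuous (line x y) := by unfold line; fun_prop

/-- The curves `c` draw all pairs but `M` along the images under `φ` of the segments
of `X`. -/
def Good (q : Fin 5 → Pt) (c : Fin 5 → Fin 5 → ℝ → Pt) (φ : Pt ≃ₜ Pt) (X : Fin 5 → Pt)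
    (M : Sym2 (Fin 5)) : Prop :=
  (∀ k, φ (X k) = q k) ∧ (∀ i j, c j i = fun t => c i j (1 - t)) ∧
  ∀ i j, i ≠ j → s(i, j) ≠ M → IsArcFrom (c i j) (q i) (q j) ∧
    arcBody (c i j) = φ '' segment ℝ (X i) (X j)

/-- Reindexing of curves. -/
def cperm (c : Fin 5 → Fin 5 → ℝ → Pt) (σ : Equiv.Perm (Fin 5)) : Fin 5 → Fin 5 → ℝ → Pt :=
  fun i j => c (σ i) (σ j)

/-- The curves `c` form, up to homeomorphism, the canonical drawing of `K₅` minus `M`. -/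
def State (q : Fin 5 → Pt) (c : Fin 5 → Fin 5 → ℝ → Pt) (M : Sym2 (Fin 5)) : Prop :=
  ∃ (σ : Equiv.Perm (Fin 5)) (φ : Pt ≃ₜ Pt), M = s(σ 0, σ 4) ∧
    Good (q ∘ σ) (cperm c σ) φ X0 s(0, 4)

theorem sym2_perm_ne (σ : Equiv.Perm (Fin 5)) {i j k l : Fin 5} (h : s(i, j) ≠ s(k, l)) :
    s(σ i, σ j) ≠ s(σ k, σ l) := by
  simpa [Sym2.eq_iff] using h

theorem good_canon {q c φ X} (τ : Equiv.Perm (Fin 5)) (hX : Config (X ∘ τ))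
    (h : Good q c φ X s(τ 0, τ 4)) :
    ∃ φ', Good (q ∘ τ) (cperm c τ) φ' X0 s(0, 4) := by
  obtain ⟨Ψ, a, b⟩ := canon _ hX
  obtain ⟨h1, h2, h3⟩ := h
  refine ⟨Ψ.trans φ, ?_, ?_, ?_⟩
  · intro k
    simp only [Homeomorph.trans_apply, a, Function.comp]
    exact h1 _
  · intro i j; exact h2 _ _
  · intro i j hij hM
    obtain ⟨h4, h5⟩ := h3 (τ i) (τ j) (fun h => hij (τ.injective h)) (sym2_perm_ne τ hM)
    refine ⟨h4, h5.trans ?_⟩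
    have := b i j hij hM
    simp only [Function.comp] at this
    rw [← this, image_image]; rfl

theorem toState {q c φ X} (τ : Equiv.Perm (Fin 5)) (hX : Config (X ∘ τ))
    (h : Good q c φ X s(τ 0, τ 4)) : State q c s(τ 0, τ 4) := by
  obtain ⟨φ', h'⟩ := good_canon τ hX h
  exact ⟨τ, φ', rfl, h'⟩

theorem State.unperm {q c} (σ : Equiv.Perm (Fin 5)) {x y : Fin 5}
    (h : State (q ∘ σ) (cperm c σ) s(x, y)) : State q c s(σ x, σ y) := by
  obtain ⟨τ, φ, h1, h2⟩ := h
  refine ⟨τ.trans σ, φ, ?_, h2⟩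
  rw [← Sym2.map_mk (f := σ) , h1]; rfl

/-- Redraw the edges which are not kept. -/
theorem redraw {q c φ X M} (hq : Function.Injective q) (hG : Good q c φ X M) (φ' : Pt ≃ₜ Pt)
    (X' : Fin 5 → Pt) (hX' : ∀ k, φ' (X' k) = q k) (kept : Fin 5 → Fin 5 → Prop)
    (hsym : ∀ i j, kept i j → kept j i)
    (hk : ∀ i j, i ≠ j → kept i j → s(i, j) ≠ M ∧
      φ' '' segment ℝ (X' i) (X' j) = φ '' segment ℝ (X i) (X j)) :
    ∃ c', (∀ M', Good q c' φ' X' M') ∧ ∀ i j, kept i j → c' i j = c i j := by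
  classical
  obtain ⟨h1, h2, h3⟩ := hG
  refine ⟨fun i j => if kept i j then c i j else fun t => φ' (line (X' i) (X' j) t),
    fun M' => ⟨hX', ?_, ?_⟩, ?_⟩
  · intro i j
    by_cases h : kept i j
    · simp only [h, hsym _ _ h, if_true]; exact h2 i j
    · have h' : ¬ kept j i := fun h' => h (hsym _ _ h')
      simp only [h, h', if_false]
      funext t
      congr 1
      unfold line
      rw [add_comm]; congr 2; ring
  · intro i j hij _
    by_cases h : kept i j
    · simp only [h, if_true]
      obtain ⟨a, b⟩ := hk i j hij h
      rw [b]; exact h3 i j hij a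
    · simp only [h, if_false]
      have hne : X' i ≠ X' j := by
        intro e
        apply hij; apply hq; rw [← hX', ← hX', e]
      refine ⟨⟨(φ'.continuous.comp (line_cont _ _)).continuousOn,
        (φ'.injective.comp (line_inj hne)).injOn, ?_, ?_⟩, ?_⟩
      · simp [line, hX']
      · simp [line, hX']
      · unfold arcBody
        rw [← line_image, image_image]
  · intro i j h; simp [h]

/-- Rerouting data: the edge `b d` is rerouted with respect to the point `r`. -/
structure RR (q : Fin 5 → Pt) (r b d : Fin 5) (c c' : Fin 5 → Fin 5 → ℝ → Pt) : Prop where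
  hbd : b ≠ d
  hbr : b ≠ r
  hdr : d ≠ r
  old : ∃ T : Set Pt, IsPreconnected T ∧ q r ∈ T ∧
    (∀ k l, k ≠ l → k ≠ r → l ≠ r → Disjoint T (arcBody (c k l))) ∧
    arcInterior (c b d) ⊆ closure T
  new : ∃ T : Set Pt, IsPreconnected T ∧ q r ∈ T ∧
    (∀ k l, k ≠ l → k ≠ r → l ≠ r → Disjoint T (arcBody (c' k l))) ∧
    arcInterior (c' b d) ⊆ closure T
  sep : ∃ z ∈ arcInterior (c b d), ∀ k l, k ≠ l → k ≠ r → l ≠ r → z ∉ arcBody (c' k l)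
  emb : ∃ Φ : Pt ≃ₜ Pt, (∀ k, k ≠ r → Φ (q k) = q k) ∧
    ∀ k l, k ≠ l → k ≠ r → l ≠ r → Φ '' arcBody (c k l) = arcBody (c' k l)
  same : ∀ k l, k ≠ l → k ≠ r → l ≠ r → s(k, l) ≠ s(b, d) → c' k l = c k l
  endp : ∀ k l, k ≠ l → k ≠ r → l ≠ r → q k ∈ arcBody (c k l) ∧ q k ∈ arcBody (c' k l)

theorem RR.congr {q r b d c c₁ c'} (h : RR q r b d c₁ c')
    (e : ∀ k l, k ≠ l → k ≠ r → l ≠ r → c₁ k l = c k l) : RR q r b d c c' where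
  hbd := h.hbd
  hbr := h.hbr
  hdr := h.hdr
  old := by
    obtain ⟨T, a1, a2, a3, a4⟩ := h.old
    rw [e b d h.hbd h.hbr h.hdr] at a4
    refine ⟨T, a1, a2, fun k l hkl hk hl => ?_, a4⟩
    rw [← e k l hkl hk hl]; exact a3 k l hkl hk hl
  new := h.new
  sep := by
    have := h.sep
    rwa [e b d h.hbd h.hbr h.hdr] at this
  emb := by
    obtain ⟨Φ, a, b⟩ := h.emb
    refine ⟨Φ, a, fun k l hkl hk hl => ?_⟩
    rw [← e k l hkl hk hl]; exact b k l hkl hk hl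
  same := fun k l hkl hk hl hM => by
    rw [← e k l hkl hk hl]; exact h.same k l hkl hk hl hM
  endp := fun k l hkl hk hl => by
    rw [← e k l hkl hk hl]; exact h.endp k l hkl hk hl

theorem RR.unperm {q r b d c c'} (σ : Equiv.Perm (Fin 5))
    (h : RR (q ∘ σ) r b d (cperm c σ) (cperm c' σ)) : RR q (σ r) (σ b) (σ d) c c' := by
  have key : ∀ R : Fin 5 → Fin 5 → Prop,
      (∀ k l, k ≠ l → k ≠ r → l ≠ r → R (σ k) (σ l)) →
      ∀ k l, k ≠ l → k ≠ σ r → l ≠ σ r → R k l := by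
    intro R hR k l hkl hk hl
    have := hR (σ.symm k) (σ.symm l) (by simpa using hkl)
      (fun h => hk (by rw [← h]; simp)) (fun h => hl (by rw [← h]; simp))
    simpa using this
  refine ⟨fun e => h.hbd (σ.injective e), fun e => h.hbr (σ.injective e),
    fun e => h.hdr (σ.injective e), ?_, ?_, ?_, ?_, ?_, key _ h.endp⟩
  · obtain ⟨T, a1, a2, a3, a4⟩ := h.old
    exact ⟨T, a1, a2, key _ a3, a4⟩
  · obtain ⟨T, a1, a2, a3, a4⟩ := h.new
    exact ⟨T, a1, a2, key _ a3, a4⟩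
  · obtain ⟨z, a1, a2⟩ := h.sep
    exact ⟨z, a1, key _ a2⟩
  · obtain ⟨Φ, a1, a2⟩ := h.emb
    refine ⟨Φ, fun k hk => ?_, key _ a2⟩
    have := a1 (σ.symm k) (fun h => hk (by rw [← h]; simp))
    simpa using this
  · refine key (fun k l => s(k, l) ≠ s(σ b, σ d) → c' k l = c k l) ?_
    intro k l hkl hk hl hM
    refine h.same k l hkl hk hl fun e => hM ?_
    rw [← Sym2.map_mk (f := σ), e]; rfl

theorem seg_lin_nonneg (w : ℝ × ℝ × ℝ) (x y z : Pt) (hx : 0 ≤ lin w x) (hy : 0 ≤ lin w y)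
    (hz : z ∈ segment ℝ x y) : 0 ≤ lin w z := by
  rw [segment_eq_image] at hz
  obtain ⟨t, ht, rfl⟩ := hz
  simp only [lin_comb]
  have h1 : 0 ≤ 1 - t := by linarith [ht.2]
  nlinarith [ht.1, mul_nonneg h1 hx, mul_nonneg ht.1 hy]

theorem arcInterior_eq {γ : ℝ → Pt} {a b : Pt} (h : IsArcFrom γ a b) :
    arcInterior γ = arcBody γ \ {a, b} := by
  obtain ⟨-, h2, h3, h4⟩ := h
  ext z
  constructor
  · rintro ⟨t, ht, rfl⟩
    refine ⟨⟨t, Ioo_subset_Icc_self ht, rfl⟩, ?_⟩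
    rintro (e | e)
    · rw [← h3] at e
      have := h2 (Ioo_subset_Icc_self ht) (by simp) e
      exact ht.1.ne' this
    · have e : γ t = b := e
      rw [← h4] at e
      have := h2 (Ioo_subset_Icc_self ht) (by simp) e
      exact ht.2.ne this
  · rintro ⟨⟨t, ht, rfl⟩, hn⟩
    refine ⟨t, ⟨lt_of_le_of_ne ht.1 ?_, lt_of_le_of_ne ht.2 ?_⟩, rfl⟩
    · rintro rfl; exact hn (Or.inl h3)
    · rintro rfl; exact hn (Or.inr h4)

theorem Good.interior {q c φ X M} (hG : Good q c φ X M) {i j : Fin 5} (hij : i ≠ j)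
    (hM : s(i, j) ≠ M) (hX : X i ≠ X j) :
    arcInterior (c i j) = φ '' openSegment ℝ (X i) (X j) := by
  obtain ⟨h1, h2, h3⟩ := hG
  obtain ⟨a, b⟩ := h3 i j hij hM
  rw [arcInterior_eq a, b, ← h1 i, ← h1 j, ← image_pair, ← image_diff φ.injective]
  congr 1
  rw [← line_image, openSegment_eq_image]
  have e0 : line (X i) (X j) 0 = X i := by simp [line]
  have e1 : line (X i) (X j) 1 = X j := by simp [line]
  have hinj := line_inj hX
  have : ({X i, X j} : Set Pt) = line (X i) (X j) '' {0, 1} := by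
    rw [image_pair, e0, e1]
  rw [this, ← image_diff hinj, Icc_diff_both]
  rfl

/-- Visibility of the segment `b d` from the point `r`. -/
theorem vis {q c φ X M} (hG : Good q c φ X M) {r b d : Fin 5} (hbd : b ≠ d) (hM : s(b, d) ≠ M)
    (hrM : ∀ k l, k ≠ r → l ≠ r → s(k, l) ≠ M) (hX : X b ≠ X d)
    (hv : ∀ k l, k ≠ l → k ≠ r → l ≠ r → ∃ w, 0 < lin w (X r) ∧ 0 ≤ lin w (X b) ∧
      0 ≤ lin w (X d) ∧ lin w (X k) ≤ 0 ∧ lin w (X l) ≤ 0) :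
    ∃ T : Set Pt, IsPreconnected T ∧ q r ∈ T ∧
    (∀ k l, k ≠ l → k ≠ r → l ≠ r → Disjoint T (arcBody (c k l))) ∧
    arcInterior (c b d) ⊆ closure T := by
  set F : ℝ × ℝ → Pt := fun z => (1 - z.2) • line (X b) (X d) z.1 + z.2 • X r with hF
  have hFc : Continuous F := by
    have := line_cont (X b) (X d)
    rw [hF]; fun_prop
  refine ⟨φ '' (F '' (Ioo (0 : ℝ) 1 ×ˢ Ioc (0 : ℝ) 1)), ?_, ?_, ?_, ?_⟩
  · exact ((isPreconnected_Ioo.prod isPreconnected_Ioc).image _ hFc.continuousOn).image _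
      φ.continuous.continuousOn
  · rw [← hG.1 r]
    refine mem_image_of_mem _ ⟨(1 / 2, 1), by constructor <;> norm_num, ?_⟩
    simp [hF]
  · intro k l hkl hk hl
    rw [(hG.2.2 k l hkl (hrM k l hk hl)).2]
    rw [disjoint_image_iff φ.injective, Set.disjoint_left]
    rintro _ ⟨⟨t, s⟩, ⟨ht, hs⟩, rfl⟩ hz
    obtain ⟨w, w1, w2, w3, w4, w5⟩ := hv k l hkl hk hl
    have h1 := seg_lin_nonpos w _ _ _ w4 w5 hz
    have h2 : 0 ≤ lin w (line (X b) (X d) t) := by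
      apply seg_lin_nonneg w _ _ _ w2 w3
      rw [← line_image]
      exact mem_image_of_mem _ (Ioo_subset_Icc_self ht)
    simp only [hF, lin_comb] at h1
    have h3 : 0 < s * lin w (X r) := mul_pos hs.1 w1
    have h4 : 0 ≤ (1 - s) * lin w (line (X b) (X d) t) :=
      mul_nonneg (by linarith [hs.2]) h2
    linarith
  · rw [hG.interior hbd hM hX]
    refine Subset.trans (image_mono ?_) (image_closure_subset_closure_image φ.continuous)
    rw [openSegment_eq_image]
    rintro _ ⟨t, ht, rfl⟩
    have h0 : F (t, 0) = (1 - t) • X b + t • X d := by simp [hF, line]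
    beta_reduce
    rw [← h0]
    refine image_closure_subset_closure_image hFc (mem_image_of_mem _ ?_)
    rw [closure_prod_eq]
    refine ⟨subset_closure ht, ?_⟩
    rw [closure_Ioc (by norm_num)]
    simp

theorem M1core {q c φ} (hq : Function.Injective q) (hG : Good q c φ X0 s(0, 4))
    (r b d : Fin 5) (hbd : b ≠ d) (hbr : b ≠ r) (hdr : d ≠ r) (hr : r = 0 ∨ r = 4)
    (X' : Fin 5 → Pt) (hX' : ∀ k, k ≠ r → X' k = X0 k)
    (w1 w2 w3 f : ℝ × ℝ × ℝ) (z0 : Pt)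
    (p1 : 0 < lin w1 (X' r)) (p2 : 0 < lin w2 (X' r)) (p3 : 0 < lin w3 (X' r))
    (p1' : 0 < lin w1 (X0 r)) (p2' : 0 < lin w2 (X0 r)) (p3' : 0 < lin w3 (X0 r))
    (hfix : ∀ k l, k ≠ l → k ≠ r → l ≠ r → s(k, l) ≠ s(b, d) →
      (lin w1 (X0 k) ≤ 0 ∧ lin w1 (X0 l) ≤ 0) ∨ (lin w2 (X0 k) ≤ 0 ∧ lin w2 (X0 l) ≤ 0) ∨
      (lin w3 (X0 k) ≤ 0 ∧ lin w3 (X0 l) ≤ 0))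
    (hv : ∀ k l, k ≠ l → k ≠ r → l ≠ r → ∃ w, 0 < lin w (X0 r) ∧ 0 ≤ lin w (X0 b) ∧
      0 ≤ lin w (X0 d) ∧ lin w (X0 k) ≤ 0 ∧ lin w (X0 l) ≤ 0)
    (hv' : ∀ k l, k ≠ l → k ≠ r → l ≠ r → ∃ w, 0 < lin w (X' r) ∧ 0 ≤ lin w (X0 b) ∧
      0 ≤ lin w (X0 d) ∧ lin w (X0 k) ≤ 0 ∧ lin w (X0 l) ≤ 0)
    (hz : z0 ∈ openSegment ℝ (X0 b) (X0 d))
    (hz1 : 0 < lin w1 z0) (hz2 : 0 < lin w2 z0) (hz3 : 0 < lin w3 z0)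
    (hfb : lin f (X0 b) = 0) (hfd : lin f (X0 d) = 0) (hf : lin f (X0 r) ≠ lin f (X' r)) :
    ∃ c' φ', (∀ M', Good q c' φ' X' M') ∧ RR q r b d c c' := by
  obtain ⟨Ψ, g, h1, h2, h3, -, h5⟩ := exists_push w1 w2 w3 (X' r) (X0 r) p1 p2 p3 p1' p2' p3'
  have fix : ∀ z, (lin w1 z ≤ 0 ∨ lin w2 z ≤ 0 ∨ lin w3 z ≤ 0) → Ψ z = z := by
    intro z hz; rw [h1, h2 z hz]; simp
  have hrM : ∀ k l, k ≠ r → l ≠ r → s(k, l) ≠ s(0, 4) := by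
    intro k l hk hl
    rcases hr with rfl | rfl
    · simp [Sym2.eq_iff, hk, hl]
    · simp [Sym2.eq_iff, hk, hl]
  have hseg0 : ∀ k l, k ≠ l → k ≠ r → l ≠ r → s(k, l) ≠ s(b, d) →
      ∀ z ∈ segment ℝ (X0 k) (X0 l), (lin w1 z ≤ 0 ∨ lin w2 z ≤ 0 ∨ lin w3 z ≤ 0) := by
    intro k l hkl hk hl hM z hz
    rcases hfix k l hkl hk hl hM with h | h | h
    · exact Or.inl (seg_lin_nonpos _ _ _ _ h.1 h.2 hz)
    · exact Or.inr (Or.inl (seg_lin_nonpos _ _ _ _ h.1 h.2 hz))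
    · exact Or.inr (Or.inr (seg_lin_nonpos _ _ _ _ h.1 h.2 hz))
  have hpt : ∀ k, k ≠ r → Ψ (X0 k) = X0 k := by
    intro k hk
    have : ∀ k r b d : Fin 5, k ≠ r → ∃ l, k ≠ l ∧ l ≠ r ∧ s(k, l) ≠ s(b, d) := by decide
    obtain ⟨l, a1, a2, a3⟩ := this k r b d hk
    exact fix _ (hseg0 k l a1 hk a2 a3 _ (left_mem_segment _ _ _))
  have hq' : ∀ k, (Ψ.trans φ) (X' k) = q k := by
    intro k
    by_cases hk : k = r
    · subst hk; simp [h5, hG.1]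
    · simp [hX' k hk, hpt k hk, hG.1]
  have hinj0 : ∀ k l, k ≠ l → X0 k ≠ X0 l := by
    intro k l hkl e
    apply hkl; apply hq; rw [← hG.1, ← hG.1, e]
  obtain ⟨c', hc', hkept⟩ := redraw hq hG (Ψ.trans φ) X' hq'
    (fun k l => k ≠ r ∧ l ≠ r ∧ s(k, l) ≠ s(b, d))
    (by rintro i j ⟨a1, a2, a3⟩; exact ⟨a2, a1, by rwa [Sym2.eq_swap]⟩)
    (by
      rintro i j hij ⟨a1, a2, a3⟩
      refine ⟨hrM i j a1 a2, ?_⟩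
      rw [hX' i a1, hX' j a2]
      change (fun z => φ (Ψ z)) '' _ = _
      rw [← image_image φ Ψ, seg_img_fix _ _ _ (fun z hz => fix z (hseg0 i j hij a1 a2 a3 z hz))])
  have hend : ∀ {γ : ℝ → Pt} {x y : Pt}, IsArcFrom γ x y → x ∈ arcBody γ :=
    fun h => ⟨0, by simp, h.2.2.1⟩
  refine ⟨c', Ψ.trans φ, hc', hbd, hbr, hdr, ?_, ?_, ?_, ?_, ?_, fun k l hkl hk hl =>
    ⟨hend (hG.2.2 k l hkl (hrM k l hk hl)).1,
      hend ((hc' s(0, 4)).2.2 k l hkl (hrM k l hk hl)).1⟩⟩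
  · exact vis hG hbd (hrM b d hbr hdr) hrM (hinj0 b d hbd) hv
  · refine vis (hc' s(0, 4)) hbd (hrM b d hbr hdr) hrM
      (by rw [hX' b hbr, hX' d hdr]; exact hinj0 b d hbd) ?_
    intro k l hkl hk hl
    rw [hX' b hbr, hX' d hdr, hX' k hk, hX' l hl]
    exact hv' k l hkl hk hl
  · refine ⟨φ z0, ?_, ?_⟩
    · rw [hG.interior hbd (hrM b d hbr hdr) (hinj0 b d hbd)]
      exact mem_image_of_mem _ hz
    · intro k l hkl hk hl hmem
      rw [((hc' s(0, 4)).2.2 k l hkl (hrM k l hk hl)).2, hX' k hk, hX' l hl] at hmem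
      obtain ⟨y, hy, e⟩ := hmem
      have e : Ψ y = z0 := φ.injective e
      by_cases hM : s(k, l) = s(b, d)
      · have hfy : ∀ y ∈ segment ℝ (X0 b) (X0 d), lin f y = 0 := fun y hy =>
          le_antisymm (seg_lin_nonpos f _ _ _ hfb.le hfd.le hy)
            (seg_lin_nonneg f _ _ _ hfb.ge hfd.ge hy)
        have hy' : y ∈ segment ℝ (X0 b) (X0 d) := by
          rcases Sym2.eq_iff.mp hM with ⟨rfl, rfl⟩ | ⟨rfl, rfl⟩
          · exact hy
          · rw [segment_symm]; exact hy
        have e1 := hfy z0 (openSegment_subset_segment _ _ _ hz)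
        rw [← e, h1, lin_add_smul, hfy y hy', zero_add] at e1
        rcases mul_eq_zero.mp e1 with e2 | e2
        · rw [h1, e2, zero_smul, add_zero] at e
          rw [e] at e2
          exact (h3 z0 hz1 hz2 hz3).ne' e2
        · exact hf (sub_eq_zero.mp e2)
      · have h6 := hseg0 k l hkl hk hl hM y hy
        rw [fix y h6] at e
        rw [e] at h6
        rcases h6 with h | h | h <;> linarith
  · refine ⟨φ.symm.trans (Ψ.trans φ), ?_, ?_⟩
    · intro k hk
      rw [← hG.1 k]; simp [hpt k hk]
    · intro k l hkl hk hl
      rw [((hc' s(0, 4)).2.2 k l hkl (hrM k l hk hl)).2, hX' k hk, hX' l hl,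
        (hG.2.2 k l hkl (hrM k l hk hl)).2, image_image]
      apply image_congr
      intro z _
      simp
  · intro k l hkl hk hl hM
    exact hkept k l ⟨hk, hl, hM⟩

end Moves
end GraphStories

namespace GraphStories

section Moves2

theorem K4e4 (R : Fin 5 → Fin 5 → Prop) (hs : ∀ i j, R i j → R j i)
    (h01 : R 0 1) (h02 : R 0 2) (h03 : R 0 3) (h12 : R 1 2) (h13 : R 1 3) (h23 : R 2 3) :
    ∀ i j, i ≠ j → i ≠ 4 → j ≠ 4 → R i j := by
  intro i j
  fin_cases i <;> fin_cases j <;> intro h1 h2 h3 <;>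
    first
    | exact absurd rfl h1
    | exact absurd rfl h2
    | exact absurd rfl h3
    | assumption
    | (apply hs; assumption)

theorem K4e0 (R : Fin 5 → Fin 5 → Prop) (hs : ∀ i j, R i j → R j i)
    (h12 : R 1 2) (h13 : R 1 3) (h14 : R 1 4) (h23 : R 2 3) (h24 : R 2 4) (h34 : R 3 4) :
    ∀ i j, i ≠ j → i ≠ 0 → j ≠ 0 → R i j := by
  intro i j
  fin_cases i <;> fin_cases j <;> intro h1 h2 h3 <;>
    first
    | exact absurd rfl h1
    | exact absurd rfl h2
    | exact absurd rfl h3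
    | assumption
    | (apply hs; assumption)

/-- The possibility of a reroute making the missing pair `r x`. -/
def Conc (q : Fin 5 → Pt) (c : Fin 5 → Fin 5 → ℝ → Pt) (r x : Fin 5) : Prop :=
  ∃ c' b d, State q c' s(r, x) ∧ RR q r b d c c'

/-- The possibility of a flip from the missing pair `M` to the missing pair `x y`. -/
def Conc2 (q : Fin 5 → Pt) (c : Fin 5 → Fin 5 → ℝ → Pt) (M : Sym2 (Fin 5)) (x y : Fin 5) :
    Prop :=
  ∃ c', State q c' s(x, y) ∧ ∀ i j, i ≠ j → s(i, j) ≠ M → s(i, j) ≠ s(x, y) → c' i j = c i j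

theorem cperm_symm (c : Fin 5 → Fin 5 → ℝ → Pt) (σ : Equiv.Perm (Fin 5)) :
    cperm (cperm c σ.symm) σ = c := by
  funext i j; simp [cperm]

theorem Conc.unperm {q c r x} (σ : Equiv.Perm (Fin 5)) (h : Conc (q ∘ σ) (cperm c σ) r x) :
    Conc q c (σ r) (σ x) := by
  obtain ⟨c', b, d, h1, h2⟩ := h
  rw [← cperm_symm c' σ] at h1 h2
  exact ⟨_, _, _, h1.unperm σ, h2.unperm σ⟩

theorem Conc2.unperm {q c m m' x y} (σ : Equiv.Perm (Fin 5))
    (h : Conc2 (q ∘ σ) (cperm c σ) s(m, m') x y) :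
    Conc2 q c s(σ m, σ m') (σ x) (σ y) := by
  obtain ⟨c', h1, h2⟩ := h
  rw [← cperm_symm c' σ] at h1 h2
  refine ⟨_, h1.unperm σ, fun i j hij hM hM' => ?_⟩
  have := h2 (σ.symm i) (σ.symm j) (by simpa using hij)
    (by rintro e; apply hM; rw [← Sym2.map_mk (f := σ), ← e]; simp)
    (by rintro e; apply hM'; rw [← Sym2.map_mk (f := σ), ← e]; simp)
  simpa [cperm] using this

theorem mem_openSegment_mk (x y z : Pt) (t : ℝ) (h0 : 0 < t) (h1 : t < 1)
    (h : z = (1 - t) • x + t • y) : z ∈ openSegment ℝ x y := by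
  rw [openSegment_eq_image]; exact ⟨t, ⟨h0, h1⟩, h.symm⟩

def pM1a : Equiv.Perm (Fin 5) := ⟨![1, 0, 2, 3, 4], ![1, 0, 2, 3, 4], by decide, by decide⟩

theorem M1a {q c φ} (hq : Function.Injective q) (hG : Good q c φ X0 s(0, 4)) :
    Conc q c 4 1 := by
  obtain ⟨c', φ', h1, h2⟩ := M1core hq hG 4 2 3 (by decide) (by decide) (by decide) (by decide)
    (cfg (0, 6) (0, 0) (6, 0) (2, 2) (3, 2)) (by apply forall5 <;> intro h <;> first | rfl | exact absurd rfl h)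
    (0, 1, 0) (-1, -1, 6) (1, 0, -2) (1, 2, -6) (4, 1)
    (by norm_num [lin, cfg_4]) (by norm_num [lin, cfg_4]) (by norm_num [lin, cfg_4])
    (by norm_num [lin, X0_4]) (by norm_num [lin, X0_4]) (by norm_num [lin, X0_4])
    (by
      apply K4e4
      · intro i j h h'; rw [Sym2.eq_swap] at h'; have := h h'; tauto
      all_goals norm_num [lin, X0_0, X0_1, X0_2, X0_3])
    (by
      apply K4e4
      · rintro i j ⟨w, a⟩; exact ⟨w, by tauto⟩
      · exact ⟨(1, 0, 0), by norm_num [lin, X0_0, X0_1, X0_2, X0_3, X0_4]⟩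
      · exact ⟨(-1, -1, 6), by norm_num [lin, X0_0, X0_1, X0_2, X0_3, X0_4]⟩
      · exact ⟨(2, 1, -6), by norm_num [lin, X0_0, X0_1, X0_2, X0_3, X0_4]⟩
      · exact ⟨(0, 1, 0), by norm_num [lin, X0_0, X0_1, X0_2, X0_3, X0_4]⟩
      · exact ⟨(1, -1, 0), by norm_num [lin, X0_0, X0_1, X0_2, X0_3, X0_4]⟩
      · exact ⟨(-1, -2, 6), by norm_num [lin, X0_0, X0_1, X0_2, X0_3, X0_4]⟩)
    (by
      apply K4e4
      · rintro i j ⟨w, a⟩; exact ⟨w, by tauto⟩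
      · exact ⟨(1, 0, 0), by norm_num [lin, X0_0, X0_1, X0_2, X0_3, cfg_4]⟩
      · exact ⟨(-1, -1, 6), by norm_num [lin, X0_0, X0_1, X0_2, X0_3, cfg_4]⟩
      · exact ⟨(2, 1, -6), by norm_num [lin, X0_0, X0_1, X0_2, X0_3, cfg_4]⟩
      · exact ⟨(0, 1, 0), by norm_num [lin, X0_0, X0_1, X0_2, X0_3, cfg_4]⟩
      · exact ⟨(1, -1, 0), by norm_num [lin, X0_0, X0_1, X0_2, X0_3, cfg_4]⟩
      · exact ⟨(1, 2, -6), by norm_num [lin, X0_0, X0_1, X0_2, X0_3, cfg_4]⟩)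
    (mem_openSegment_mk _ _ _ (1 / 2) (by norm_num) (by norm_num)
      (by ext <;> norm_num [X0_2, X0_3]))
    (by norm_num [lin]) (by norm_num [lin]) (by norm_num [lin])
    (by norm_num [lin, X0_2]) (by norm_num [lin, X0_3]) (by norm_num [lin, X0_4, cfg_4])
  refine ⟨c', 2, 3, ?_, h2⟩
  have := toState pM1a (X := cfg (0, 6) (0, 0) (6, 0) (2, 2) (3, 2)) ⟨?_, ?_, ?_⟩
    (h1 s(pM1a 0, pM1a 4))
  · rw [Sym2.eq_swap]; exact this
  · change ((6 : ℝ) - 0) * (0 - 6) - (0 - 6) * (0 - 0) ≠ 0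
    norm_num
  · refine ⟨1 / 3, 1 / 3, 1 / 3, by norm_num, by norm_num, by norm_num, by norm_num, ?_⟩
    change ((2, 2) : Pt) = (1 / 3 : ℝ) • (0, 0) + (1 / 3 : ℝ) • (0, 6) + (1 / 3 : ℝ) • (6, 0)
    ext <;> norm_num
  · refine ⟨1 / 6, 1 / 3, 1 / 2, by norm_num, by norm_num, by norm_num, by norm_num, ?_⟩
    change ((3, 2) : Pt) = (1 / 6 : ℝ) • (0, 6) + (1 / 3 : ℝ) • (6, 0) + (1 / 2 : ℝ) • (2, 2)
    ext <;> norm_num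

end Moves2
end GraphStories

namespace GraphStories

section Moves3

def pM1b : Equiv.Perm (Fin 5) := ⟨![4, 0, 2, 1, 3], ![1, 3, 2, 4, 0], by decide, by decide⟩
def pM1c : Equiv.Perm (Fin 5) := ⟨![1, 2, 3, 4, 0], ![4, 0, 1, 2, 3], by decide, by decide⟩
def pW : Equiv.Perm (Fin 5) := ⟨![0, 1, 3, 2, 4], ![0, 1, 3, 2, 4], by decide, by decide⟩
def pM2a : Equiv.Perm (Fin 5) := ⟨![2, 1, 0, 4, 3], ![2, 1, 0, 4, 3], by decide, by decide⟩
def pM2b : Equiv.Perm (Fin 5) := ⟨![2, 4, 0, 3, 1], ![2, 4, 0, 3, 1], by decide, by decide⟩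
def pS : Equiv.Perm (Fin 5) := ⟨![0, 2, 1, 3, 4], ![0, 2, 1, 3, 4], by decide, by decide⟩

theorem M1b {q c φ} (hq : Function.Injective q) (hG : Good q c φ X0 s(0, 4)) :
    Conc q c 4 3 := by
  obtain ⟨c', φ', h1, h2⟩ := M1core hq hG 4 1 2 (by decide) (by decide) (by decide) (by decide)
    (cfg (0, 6) (0, 0) (6, 0) (2, 2) (-1, -3))
    (by apply forall5 <;> intro h <;> first | rfl | exact absurd rfl h)
    (1, -1, 0) (-1, -2, 6) (0, 1, 10) (0, 1, 0) (3, 0)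
    (by norm_num [lin, cfg_4]) (by norm_num [lin, cfg_4]) (by norm_num [lin, cfg_4])
    (by norm_num [lin, X0_4]) (by norm_num [lin, X0_4]) (by norm_num [lin, X0_4])
    (by
      apply K4e4
      · intro i j h h'; rw [Sym2.eq_swap] at h'; have := h h'; tauto
      all_goals norm_num [lin, X0_0, X0_1, X0_2, X0_3])
    (by
      apply K4e4
      · rintro i j ⟨w, a⟩; exact ⟨w, by tauto⟩
      · exact ⟨(1, 0, 0), by norm_num [lin, X0_0, X0_1, X0_2, X0_3, X0_4]⟩
      · exact ⟨(-1, -1, 6), by norm_num [lin, X0_0, X0_1, X0_2, X0_3, X0_4]⟩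
      · exact ⟨(0, -1, 2), by norm_num [lin, X0_0, X0_1, X0_2, X0_3, X0_4]⟩
      · exact ⟨(0, 1, 0), by norm_num [lin, X0_0, X0_1, X0_2, X0_3, X0_4]⟩
      · exact ⟨(1, -1, 0), by norm_num [lin, X0_0, X0_1, X0_2, X0_3, X0_4]⟩
      · exact ⟨(-1, -2, 6), by norm_num [lin, X0_0, X0_1, X0_2, X0_3, X0_4]⟩)
    (by
      apply K4e4
      · rintro i j ⟨w, a⟩; exact ⟨w, by tauto⟩
      all_goals exact ⟨(0, -1, 0), by norm_num [lin, X0_0, X0_1, X0_2, X0_3, cfg_4]⟩)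
    (mem_openSegment_mk _ _ _ (1 / 2) (by norm_num) (by norm_num)
      (by ext <;> norm_num [X0_1, X0_2]))
    (by norm_num [lin]) (by norm_num [lin]) (by norm_num [lin])
    (by norm_num [lin, X0_1]) (by norm_num [lin, X0_2]) (by norm_num [lin, X0_4, cfg_4])
  refine ⟨c', 1, 2, ?_, h2⟩
  refine toState pM1b (X := cfg (0, 6) (0, 0) (6, 0) (2, 2) (-1, -3)) ⟨?_, ?_, ?_⟩
    (h1 s(pM1b 0, pM1b 4))
  · change ((6 : ℝ) - 0) * (-3 - 6) - (0 - 6) * (-1 - 0) ≠ 0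
    norm_num
  · refine ⟨6 / 10, 3 / 10, 1 / 10, by norm_num, by norm_num, by norm_num, by norm_num, ?_⟩
    change ((0, 0) : Pt) = (6 / 10 : ℝ) • (-1, -3) + (3 / 10 : ℝ) • (0, 6) + (1 / 10 : ℝ) • (6, 0)
    ext <;> norm_num
  · refine ⟨1 / 3, 1 / 3, 1 / 3, by norm_num, by norm_num, by norm_num, by norm_num, ?_⟩
    change ((2, 2) : Pt) = (1 / 3 : ℝ) • (0, 6) + (1 / 3 : ℝ) • (6, 0) + (1 / 3 : ℝ) • (0, 0)
    ext <;> norm_num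

theorem M1c {q c φ} (hq : Function.Injective q) (hG : Good q c φ X0 s(0, 4)) :
    Conc q c 0 1 := by
  obtain ⟨c', φ', h1, h2⟩ := M1core hq hG 0 2 3 (by decide) (by decide) (by decide) (by decide)
    (cfg (11 / 3, 1) (0, 0) (6, 0) (2, 2) (3, 1))
    (by apply forall5 <;> intro h <;> first | rfl | exact absurd rfl h)
    (1, 1, -4) (1, 3, -6) (0, 0, 1) (1, 2, -6) (4, 1)
    (by norm_num [lin, cfg_0]) (by norm_num [lin, cfg_0]) (by norm_num [lin, cfg_0])
    (by norm_num [lin, X0_0]) (by norm_num [lin, X0_0]) (by norm_num [lin, X0_0])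
    (by
      apply K4e0
      · intro i j h h'; rw [Sym2.eq_swap] at h'; have := h h'; tauto
      all_goals norm_num [lin, X0_4, X0_1, X0_2, X0_3])
    (by
      apply K4e0
      · rintro i j ⟨w, a⟩; exact ⟨w, by tauto⟩
      · exact ⟨(0, 1, 0), by norm_num [lin, X0_0, X0_1, X0_2, X0_3, X0_4]⟩
      · exact ⟨(1, 1, -4), by norm_num [lin, X0_0, X0_1, X0_2, X0_3, X0_4]⟩
      · exact ⟨(1, 1, -4), by norm_num [lin, X0_0, X0_1, X0_2, X0_3, X0_4]⟩
      · exact ⟨(1, 2, -6), by norm_num [lin, X0_0, X0_1, X0_2, X0_3, X0_4]⟩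
      · exact ⟨(1, 3, -6), by norm_num [lin, X0_0, X0_1, X0_2, X0_3, X0_4]⟩
      · exact ⟨(1, 1, -4), by norm_num [lin, X0_0, X0_1, X0_2, X0_3, X0_4]⟩)
    (by
      apply K4e0
      · rintro i j ⟨w, a⟩; exact ⟨w, by tauto⟩
      · exact ⟨(0, 1, 0), by norm_num [lin, cfg_0, X0_1, X0_2, X0_3, X0_4]⟩
      · exact ⟨(1, 1, -4), by norm_num [lin, cfg_0, X0_1, X0_2, X0_3, X0_4]⟩
      · exact ⟨(1, 1, -4), by norm_num [lin, cfg_0, X0_1, X0_2, X0_3, X0_4]⟩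
      · exact ⟨(-1, -2, 6), by norm_num [lin, cfg_0, X0_1, X0_2, X0_3, X0_4]⟩
      · exact ⟨(1, 3, -6), by norm_num [lin, cfg_0, X0_1, X0_2, X0_3, X0_4]⟩
      · exact ⟨(1, 1, -4), by norm_num [lin, cfg_0, X0_1, X0_2, X0_3, X0_4]⟩)
    (mem_openSegment_mk _ _ _ (1 / 2) (by norm_num) (by norm_num)
      (by ext <;> norm_num [X0_2, X0_3]))
    (by norm_num [lin]) (by norm_num [lin]) (by norm_num [lin])
    (by norm_num [lin, X0_2]) (by norm_num [lin, X0_3]) (by norm_num [lin, X0_0, cfg_0])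
  refine ⟨c', 2, 3, ?_, h2⟩
  have := toState pM1c (X := cfg (11 / 3, 1) (0, 0) (6, 0) (2, 2) (3, 1)) ⟨?_, ?_, ?_⟩
    (h1 s(pM1c 0, pM1c 4))
  · rw [Sym2.eq_swap]; exact this
  · change ((2 : ℝ) - 6) * (0 - 0) - (2 - 0) * (0 - 6) ≠ 0
    norm_num
  · refine ⟨1 / 6, 1 / 3, 1 / 2, by norm_num, by norm_num, by norm_num, by norm_num, ?_⟩
    change ((3, 1) : Pt) = (1 / 6 : ℝ) • (0, 0) + (1 / 3 : ℝ) • (6, 0) + (1 / 2 : ℝ) • (2, 2)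
    ext <;> norm_num
  · refine ⟨1 / 3, 1 / 3, 1 / 3, by norm_num, by norm_num, by norm_num, by norm_num, ?_⟩
    change ((11 / 3, 1) : Pt) = (1 / 3 : ℝ) • (6, 0) + (1 / 3 : ℝ) • (2, 2) + (1 / 3 : ℝ) • (3, 1)
    ext <;> norm_num

theorem good_swap {q c φ} (hG : Good q c φ X0 s(0, 4)) :
    ∃ φ', Good (q ∘ pS) (cperm c pS) φ' X0 s(0, 4) := by
  refine good_canon pS ⟨?_, ?_, ?_⟩ hG
  · change ((0 : ℝ) - 6) * (6 - 0) - (0 - 0) * (0 - 6) ≠ 0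
    norm_num
  · refine ⟨1 / 3, 1 / 3, 1 / 3, by norm_num, by norm_num, by norm_num, by norm_num, ?_⟩
    change ((2, 2) : Pt) = (1 / 3 : ℝ) • (0, 6) + (1 / 3 : ℝ) • (6, 0) + (1 / 3 : ℝ) • (0, 0)
    ext <;> norm_num
  · refine ⟨1 / 3, 1 / 6, 1 / 2, by norm_num, by norm_num, by norm_num, by norm_num, ?_⟩
    change ((3, 1) : Pt) = (1 / 3 : ℝ) • (6, 0) + (1 / 6 : ℝ) • (0, 0) + (1 / 2 : ℝ) • (2, 2)
    ext <;> norm_num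

theorem Wmove {q c φ} (hq : Function.Injective q) (hG : Good q c φ X0 s(0, 4)) :
    ∃ c₁, (∀ k l, k ≠ l → k ≠ 0 → l ≠ 0 → c₁ k l = c k l) ∧
      ∃ φ', Good (q ∘ pW) (cperm c₁ pW) φ' X0 s(0, 4) := by
  obtain ⟨Ψ, g, h1, h2, -, -, h5⟩ := exists_push (1, 2, -6) (0, 0, 1) (0, 0, 1) (10, -1)
    (0, 6) (by norm_num [lin]) (by norm_num [lin]) (by norm_num [lin])
    (by norm_num [lin]) (by norm_num [lin]) (by norm_num [lin])
  have fix : ∀ z, lin (1, 2, -6) z ≤ 0 → Ψ z = z := by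
    intro z hz; rw [h1, h2 z (Or.inl hz)]; simp
  have hl : ∀ k, k ≠ 0 → lin (1, 2, -6) (X0 k) ≤ 0 := by
    apply forall5
    · intro h; exact absurd rfl h
    all_goals norm_num [lin, X0_1, X0_2, X0_3, X0_4]
  have hX' : ∀ k, k ≠ 0 → cfg (10, -1) (0, 0) (6, 0) (2, 2) (3, 1) k = X0 k := by
    apply forall5
    · intro h; exact absurd rfl h
    all_goals intro _; rfl
  obtain ⟨c', hc', hk⟩ := redraw hq hG (Ψ.trans φ) (cfg (10, -1) (0, 0) (6, 0) (2, 2) (3, 1))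
    (by
      intro k
      by_cases h : k = 0
      · subst h; rw [← hG.1 0, Homeomorph.trans_apply, cfg_0, h5]; rfl
      · rw [hX' k h, Homeomorph.trans_apply, fix _ (hl k h), hG.1])
    (fun i j => i ≠ 0 ∧ j ≠ 0) (fun i j h => ⟨h.2, h.1⟩)
    (by
      rintro i j hij ⟨a1, a2⟩
      refine ⟨by simp [Sym2.eq_iff, a1, a2], ?_⟩
      rw [hX' i a1, hX' j a2]
      change (fun z => φ (Ψ z)) '' _ = _
      rw [← image_image φ Ψ, seg_img_fix _ _ _ (fun z hz => fix z
        (seg_lin_nonpos _ _ _ _ (hl i a1) (hl j a2) hz))])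
  refine ⟨c', fun k l _ hk' hl' => hk k l ⟨hk', hl'⟩, ?_⟩
  refine good_canon pW (X := cfg (10, -1) (0, 0) (6, 0) (2, 2) (3, 1)) ⟨?_, ?_, ?_⟩ (hc' _)
  · change ((2 : ℝ) - 0) * (-1 - 0) - (2 - 0) * (10 - 0) ≠ 0
    norm_num
  · refine ⟨6 / 11, 2 / 11, 3 / 11, by norm_num, by norm_num, by norm_num, by norm_num, ?_⟩
    change ((6, 0) : Pt) = (6 / 11 : ℝ) • (10, -1) + (2 / 11 : ℝ) • (0, 0) + (3 / 11 : ℝ) • (2, 2)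
    ext <;> norm_num
  · refine ⟨1 / 6, 1 / 2, 1 / 3, by norm_num, by norm_num, by norm_num, by norm_num, ?_⟩
    change ((3, 1) : Pt) = (1 / 6 : ℝ) • (0, 0) + (1 / 2 : ℝ) • (2, 2) + (1 / 3 : ℝ) • (6, 0)
    ext <;> norm_num

theorem M2a {q c φ} (hq : Function.Injective q) (hG : Good q c φ X0 s(0, 4)) :
    Conc2 q c s(0, 4) 2 3 := by
  obtain ⟨c', hc', hk⟩ := redraw hq hG φ X0 hG.1 (fun i j => s(i, j) ≠ s(0, 4))
    (by intro i j h; rwa [Sym2.eq_swap]) (fun i j _ h => ⟨h, rfl⟩)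
  refine ⟨c', ?_, fun i j _ h _ => hk i j h⟩
  refine toState pM2a (X := X0) ⟨?_, ?_, ?_⟩ (hc' s(pM2a 0, pM2a 4))
  · change ((0 : ℝ) - 0) * (0 - 0) - (6 - 0) * (6 - 0) ≠ 0
    norm_num
  · refine ⟨1 / 2, 1 / 3, 1 / 6, by norm_num, by norm_num, by norm_num, by norm_num, ?_⟩
    change ((3, 1) : Pt) = (1 / 2 : ℝ) • (6, 0) + (1 / 3 : ℝ) • (0, 0) + (1 / 6 : ℝ) • (0, 6)
    ext <;> norm_num
  · refine ⟨1 / 9, 2 / 9, 2 / 3, by norm_num, by norm_num, by norm_num, by norm_num, ?_⟩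
    change ((2, 2) : Pt) = (1 / 9 : ℝ) • (0, 0) + (2 / 9 : ℝ) • (0, 6) + (2 / 3 : ℝ) • (3, 1)
    ext <;> norm_num

theorem M2b {q c φ} (hq : Function.Injective q) (hG : Good q c φ X0 s(0, 4)) :
    Conc2 q c s(0, 4) 1 2 := by
  obtain ⟨Ψ, g, h1, h2, -, h4, h5⟩ := exists_push (1, -1, 0) (-1, -2, 6) (0, 1, 10) (-1, -3)
    (3, 1) (by norm_num [lin]) (by norm_num [lin]) (by norm_num [lin])
    (by norm_num [lin]) (by norm_num [lin]) (by norm_num [lin])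
  have fix : ∀ z, (lin (1, -1, 0) z ≤ 0 ∨ lin (-1, -2, 6) z ≤ 0 ∨ lin (0, 1, 10) z ≤ 0) →
      Ψ z = z := by
    intro z hz; rw [h1, h2 z hz]; simp
  have seg : ∀ i j, i ≠ j → s(i, j) ≠ s(0, 4) → (s(i, j) ≠ s(1, 2) →
      Ψ '' segment ℝ (cfg (0, 6) (0, 0) (6, 0) (2, 2) (-1, -3) i)
        (cfg (0, 6) (0, 0) (6, 0) (2, 2) (-1, -3) j) = segment ℝ (X0 i) (X0 j)) := by
    apply edges9
    · intro i j h h'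
      rw [segment_symm ℝ (cfg _ _ _ _ _ j), h (by rwa [Sym2.eq_swap]), segment_symm]
    · exact fun _ => seg_img_fix _ _ _ fun z hz => fix z (Or.inl
        (seg_lin_nonpos _ _ _ _ (by norm_num [lin, cfg_0, cfg_1]) (by norm_num [lin, cfg_1]) hz))
    · exact fun _ => seg_img_fix _ _ _ fun z hz => fix z (Or.inr (Or.inl
        (seg_lin_nonpos _ _ _ _ (by norm_num [lin, cfg_0]) (by norm_num [lin, cfg_2]) hz)))
    · exact fun _ => seg_img_fix _ _ _ fun z hz => fix z (Or.inl
        (seg_lin_nonpos _ _ _ _ (by norm_num [lin, cfg_0]) (by norm_num [lin, cfg_3]) hz))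
    · intro h; exact absurd rfl h
    · exact fun _ => seg_img_fix _ _ _ fun z hz => fix z (Or.inl
        (seg_lin_nonpos _ _ _ _ (by norm_num [lin, cfg_1]) (by norm_num [lin, cfg_3]) hz))
    · exact fun _ => seg_img _ _ _ _ _ fun t t0 t1 => h4 _ t t0 t1 (by norm_num [lin, cfg_1])
        (by norm_num [lin, cfg_1]) (by norm_num [lin, cfg_1]) (by norm_num [lin, cfg_1])
    · exact fun _ => seg_img_fix _ _ _ fun z hz => fix z (Or.inr (Or.inl
        (seg_lin_nonpos _ _ _ _ (by norm_num [lin, cfg_2]) (by norm_num [lin, cfg_3]) hz)))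
    · exact fun _ => seg_img _ _ _ _ _ fun t t0 t1 => h4 _ t t0 t1 (by norm_num [lin, cfg_2])
        (by norm_num [lin, cfg_2]) (by norm_num [lin, cfg_2]) (by norm_num [lin, cfg_2])
    · exact fun _ => seg_img _ _ _ _ _ fun t t0 t1 => h4 _ t t0 t1 (by norm_num [lin, cfg_3])
        (by norm_num [lin, cfg_3]) (by norm_num [lin, cfg_3]) (by norm_num [lin, cfg_3])
  obtain ⟨c', hc', hk⟩ := redraw hq hG (Ψ.trans φ) (cfg (0, 6) (0, 0) (6, 0) (2, 2) (-1, -3))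
    (by
      have : ∀ k, Ψ (cfg (0, 6) (0, 0) (6, 0) (2, 2) (-1, -3) k) = X0 k := by
        apply forall5
        · exact fix _ (by norm_num [lin, cfg_0])
        · exact fix _ (by norm_num [lin, cfg_1])
        · exact fix _ (by norm_num [lin, cfg_2])
        · exact fix _ (by norm_num [lin, cfg_3])
        · exact h5
      intro k
      rw [Homeomorph.trans_apply, this, hG.1])
    (fun i j => s(i, j) ≠ s(0, 4) ∧ s(i, j) ≠ s(1, 2))
    (by intro i j h; rwa [Sym2.eq_swap])
    (by
      intro i j hij h
      refine ⟨h.1, ?_⟩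
      rw [← seg i j hij h.1 h.2, image_image]; rfl)
  refine ⟨c', ?_, fun i j _ h h' => hk i j ⟨h, h'⟩⟩
  have := toState pM2b (X := cfg (0, 6) (0, 0) (6, 0) (2, 2) (-1, -3)) ⟨?_, ?_, ?_⟩
    (hc' s(pM2b 0, pM2b 4))
  · rw [Sym2.eq_swap]; exact this
  · change ((0 : ℝ) - (-1)) * (0 - (-3)) - (6 - (-3)) * (6 - (-1)) ≠ 0
    norm_num
  · refine ⟨11 / 30, 1 / 5, 13 / 30, by norm_num, by norm_num, by norm_num, by norm_num, ?_⟩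
    change ((2, 2) : Pt) = (11 / 30 : ℝ) • (6, 0) + (1 / 5 : ℝ) • (-1, -3) + (13 / 30 : ℝ) • (0, 6)
    ext <;> norm_num
  · refine ⟨6 / 11, 2 / 11, 3 / 11, by norm_num, by norm_num, by norm_num, by norm_num, ?_⟩
    change ((0, 0) : Pt) = (6 / 11 : ℝ) • (-1, -3) + (2 / 11 : ℝ) • (0, 6) + (3 / 11 : ℝ) • (2, 2)
    ext <;> norm_num

theorem inj_comp {q : Fin 5 → Pt} (hq : Function.Injective q) (σ : Equiv.Perm (Fin 5)) :
    Function.Injective (q ∘ σ) := hq.comp σ.injective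

theorem M1_04 {q c φ} (hq : Function.Injective q) (hG : Good q c φ X0 s(0, 4)) :
    (Conc q c 4 1 ∧ Conc q c 4 2 ∧ Conc q c 4 3) ∧ Conc q c 0 1 ∧ Conc q c 0 2 ∧ Conc q c 0 3 := by
  have h02 : ∀ {q c φ}, Function.Injective q → Good q c φ X0 s(0, 4) → Conc q c 0 2 := by
    intro q c φ hq hG
    obtain ⟨φ', h⟩ := good_swap hG
    exact (M1c (inj_comp hq _) h).unperm pS
  refine ⟨⟨M1a hq hG, ?_, M1b hq hG⟩, M1c hq hG, h02 hq hG, ?_⟩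
  · obtain ⟨φ', h⟩ := good_swap hG
    exact (M1a (inj_comp hq _) h).unperm pS
  · obtain ⟨c₁, e, φ', h⟩ := Wmove hq hG
    obtain ⟨c', b, d, h1, h2⟩ := (h02 (inj_comp hq _) h).unperm pW
    exact ⟨c', b, d, h1, RR.congr (r := 0) h2 e⟩

theorem M2_04 {q c φ} (hq : Function.Injective q) (hG : Good q c φ X0 s(0, 4)) :
    Conc2 q c s(0, 4) 2 3 ∧ Conc2 q c s(0, 4) 1 3 ∧ Conc2 q c s(0, 4) 1 2 := by
  refine ⟨M2a hq hG, ?_, M2b hq hG⟩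
  obtain ⟨φ', h⟩ := good_swap hG
  exact (M2a (inj_comp hq _) h).unperm pS

theorem fullM1 {q c} (hq : Function.Injective q) {r u x : Fin 5} (h : State q c s(r, u))
    (hxr : x ≠ r) (hxu : x ≠ u) : Conc q c r x := by
  obtain ⟨σ, φ, hM, hG⟩ := h
  obtain ⟨⟨a1, a2, a3⟩, b1, b2, b3⟩ := M1_04 (inj_comp hq σ) hG
  obtain ⟨k, rfl⟩ := σ.surjective x
  have hk : k ≠ 0 ∧ k ≠ 4 := by
    rcases Sym2.eq_iff.mp hM with ⟨e1, e2⟩ | ⟨e1, e2⟩ <;> subst e1 <;> subst e2 <;>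
      constructor <;> rintro rfl <;> first | exact hxr rfl | exact hxu rfl
  have hk' : ∀ k : Fin 5, k ≠ 0 ∧ k ≠ 4 → k = 1 ∨ k = 2 ∨ k = 3 := by decide
  rcases Sym2.eq_iff.mp hM with ⟨rfl, -⟩ | ⟨rfl, -⟩ <;>
    rcases hk' k hk with rfl | rfl | rfl
  · exact b1.unperm σ
  · exact b2.unperm σ
  · exact b3.unperm σ
  · exact a1.unperm σ
  · exact a2.unperm σ
  · exact a3.unperm σ

theorem Conc2.symm {q c M x y} (h : Conc2 q c M x y) : Conc2 q c M y x := by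
  unfold Conc2 at *
  rwa [Sym2.eq_swap (a := y)]

theorem fullM2 {q c} (hq : Function.Injective q) {M : Sym2 (Fin 5)} {x y : Fin 5}
    (h : State q c M) (hxy : x ≠ y) (hx : x ∉ M) (hy : y ∉ M) : Conc2 q c M x y := by
  obtain ⟨σ, φ, rfl, hG⟩ := h
  obtain ⟨a1, a2, a3⟩ := M2_04 (inj_comp hq σ) hG
  obtain ⟨k, rfl⟩ := σ.surjective x
  obtain ⟨l, rfl⟩ := σ.surjective y
  simp only [Sym2.mem_iff, not_or, σ.injective.eq_iff, ne_eq] at hx hy hxy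
  have key : ∀ k l : Fin 5, ¬ k = l → (¬ k = 0 ∧ ¬ k = 4) → (¬ l = 0 ∧ ¬ l = 4) →
    (k = 1 ∧ l = 2) ∨ (k = 2 ∧ l = 1) ∨ (k = 1 ∧ l = 3) ∨ (k = 3 ∧ l = 1) ∨
    (k = 2 ∧ l = 3) ∨ (k = 3 ∧ l = 2) := by intro k l; omega
  rcases key k l hxy hx hy with ⟨rfl, rfl⟩ | ⟨rfl, rfl⟩ | ⟨rfl, rfl⟩ | ⟨rfl, rfl⟩ |
    ⟨rfl, rfl⟩ | ⟨rfl, rfl⟩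
  · exact a3.unperm σ
  · exact a3.symm.unperm σ
  · exact a2.unperm σ
  · exact a2.symm.unperm σ
  · exact a1.unperm σ
  · exact a1.symm.unperm σ

end Moves3
end GraphStories

namespace GraphStories

section Planarity

/-- Twice the signed area of a triangle. -/
def ori (a b z : Pt) : ℝ := (b.1 - a.1) * (z.2 - a.2) - (b.2 - a.2) * (z.1 - a.1)

theorem ori_comb (a b x y : Pt) (t : ℝ) :
    ori a b ((1 - t) • x + t • y) = (1 - t) * ori a b x + t * ori a b y := by
  simp [ori]; ring

theorem ori_left (a b : Pt) : ori a b a = 0 := by simp [ori]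

theorem ori_right (a b : Pt) : ori a b b = 0 := by simp [ori]; ring

def XZ : Fin 5 → ℤ × ℤ := ![(0, 6), (0, 0), (6, 0), (2, 2), (3, 1)]

theorem X0_cast : ∀ k, X0 k = (((XZ k).1 : ℝ), ((XZ k).2 : ℝ)) := by
  apply forall5
  · change ((0, 6) : Pt) = (((0 : ℤ) : ℝ), ((6 : ℤ) : ℝ)); norm_num
  · change ((0, 0) : Pt) = (((0 : ℤ) : ℝ), ((0 : ℤ) : ℝ)); norm_num
  · change ((6, 0) : Pt) = (((6 : ℤ) : ℝ), ((0 : ℤ) : ℝ)); norm_num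
  · change ((2, 2) : Pt) = (((2 : ℤ) : ℝ), ((2 : ℤ) : ℝ)); norm_num
  · change ((3, 1) : Pt) = (((3 : ℤ) : ℝ), ((1 : ℤ) : ℝ)); norm_num

def oz (i j k : Fin 5) : ℤ :=
  ((XZ j).1 - (XZ i).1) * ((XZ k).2 - (XZ i).2) - ((XZ j).2 - (XZ i).2) * ((XZ k).1 - (XZ i).1)

theorem ori_cast (i j k : Fin 5) : ori (X0 i) (X0 j) (X0 k) = (oz i j k : ℝ) := by
  rw [X0_cast i, X0_cast j, X0_cast k]
  simp [ori, oz]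

def sepb (i j k l : Fin 5) : Bool :=
  decide (0 ≤ oz k l i) && decide (0 ≤ oz k l j) && decide (0 < oz k l i + oz k l j)

def sepall (i j k l : Fin 5) : Bool :=
  decide (i = j) || decide (k = l) || decide (s(i, j) = s(0, 4)) || decide (s(k, l) = s(0, 4)) ||
  decide (s(i, j) = s(k, l)) ||
  sepb i j k l || sepb i j l k || sepb k l i j || sepb k l j i

theorem sepall_true : ∀ i j k l, sepall i j k l = true := by decide +kernel

theorem oz_ne : ∀ i j k : Fin 5, i ≠ j → k ≠ i → k ≠ j → oz i j k ≠ 0 := by decide +kernel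

theorem sep_disj {i j k l : Fin 5} (h : sepb i j k l = true) :
    Disjoint (openSegment ℝ (X0 i) (X0 j)) (openSegment ℝ (X0 k) (X0 l)) := by
  simp only [sepb, Bool.and_eq_true, decide_eq_true_eq] at h
  obtain ⟨⟨h1, h2⟩, h3⟩ := h
  rw [Set.disjoint_left]
  intro z hz hz'
  rw [openSegment_eq_image] at hz hz'
  obtain ⟨t, ht, rfl⟩ := hz
  obtain ⟨u, hu, e⟩ := hz'
  have e' := congrArg (ori (X0 k) (X0 l)) e
  simp only [ori_comb, ori_left, ori_right, ori_cast] at e'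
  have g1 : (0 : ℝ) ≤ oz k l i := by exact_mod_cast h1
  have g2 : (0 : ℝ) ≤ oz k l j := by exact_mod_cast h2
  have g3 : (0 : ℝ) < oz k l i + oz k l j := by exact_mod_cast h3
  have k1 : 0 < 1 - t := by linarith [ht.2]
  have k2 := mul_nonneg k1.le g1
  have k3 := mul_nonneg ht.1.le g2
  rcases lt_or_eq_of_le g1 with g | g
  · have := mul_pos k1 g
    linarith
  · rw [← g, zero_add] at g3
    have := mul_pos ht.1 g3
    linarith

theorem X0_inj : Function.Injective X0 := by
  have h : Function.Injective XZ := by decide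
  intro i j e
  apply h
  rw [X0_cast, X0_cast, Prod.mk.injEq] at e
  ext
  · exact_mod_cast e.1
  · exact_mod_cast e.2

theorem X0_seg_disj {i j k l : Fin 5} (hij : i ≠ j) (hkl : k ≠ l) (h1 : s(i, j) ≠ s(0, 4))
    (h2 : s(k, l) ≠ s(0, 4)) (h : s(i, j) ≠ s(k, l)) :
    Disjoint (openSegment ℝ (X0 i) (X0 j)) (openSegment ℝ (X0 k) (X0 l)) := by
  have := sepall_true i j k l
  simp only [sepall, hij, hkl, h1, h2, h, decide_false, Bool.false_or, Bool.or_eq_true] at this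
  rcases this with ((a | a) | a) | a
  · exact sep_disj a
  · rw [openSegment_symm ℝ (X0 k)]; exact sep_disj a
  · exact (sep_disj a).symm
  · rw [openSegment_symm ℝ (X0 i)]; exact (sep_disj a).symm

theorem X0_off {i j k : Fin 5} (hij : i ≠ j) : X0 k ∉ openSegment ℝ (X0 i) (X0 j) := by
  intro h
  by_cases hi : k = i
  · subst hi
    rw [left_mem_openSegment_iff] at h
    exact hij (X0_inj h)
  by_cases hj : k = j
  · subst hj
    rw [right_mem_openSegment_iff] at h
    exact hij (X0_inj h)
  rw [openSegment_eq_image] at h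
  obtain ⟨t, ht, e⟩ := h
  have e' := congrArg (ori (X0 i) (X0 j)) e
  simp only [ori_comb, ori_left, ori_right, ori_cast] at e'
  apply oz_ne i j k hij hi hj
  have : (oz i j k : ℝ) = 0 := by linarith
  exact_mod_cast this

/-- A planar drawing of `K₅` minus the pair `M`. -/
structure PS (q : Fin 5 → Pt) (c : Fin 5 → Fin 5 → ℝ → Pt) (M : Sym2 (Fin 5)) : Prop where
  symm : ∀ i j, c j i = fun t => c i j (1 - t)
  arc : ∀ i j, i ≠ j → s(i, j) ≠ M → IsArcFrom (c i j) (q i) (q j)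
  off : ∀ i j, i ≠ j → s(i, j) ≠ M → ∀ k, q k ∉ arcInterior (c i j)
  disj : ∀ i j, i ≠ j → s(i, j) ≠ M → ∀ k l, k ≠ l → s(k, l) ≠ M → s(i, j) ≠ s(k, l) →
    Disjoint (arcInterior (c i j)) (arcInterior (c k l))

theorem Good.PS {q c φ} (hG : Good q c φ X0 s(0, 4)) : PS q c s(0, 4) where
  symm := hG.2.1
  arc := fun i j hij hM => (hG.2.2 i j hij hM).1
  off := fun i j hij hM k hk => by
    rw [hG.interior hij hM (fun e => hij (X0_inj e)), ← hG.1 k] at hk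
    exact X0_off hij ((φ.injective.mem_set_image).mp hk)
  disj := fun i j hij hM k l hkl hM' hne => by
    rw [hG.interior hij hM (fun e => hij (X0_inj e)),
      hG.interior hkl hM' (fun e => hkl (X0_inj e)), disjoint_image_iff φ.injective]
    exact X0_seg_disj hij hkl hM hM' hne

theorem State.PS {q c M} (h : State q c M) : PS q c M := by
  obtain ⟨σ, φ, rfl, hG⟩ := h
  have P := hG.PS
  have key : ∀ R : Fin 5 → Fin 5 → Prop,
      (∀ i j, i ≠ j → s(i, j) ≠ s(0, 4) → R (σ i) (σ j)) →
      ∀ i j, i ≠ j → s(i, j) ≠ s(σ 0, σ 4) → R i j := by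
    intro R hR i j hij hM
    have := hR (σ.symm i) (σ.symm j) (by simpa using hij) (by
      intro e; apply hM; rw [← Sym2.map_mk (f := σ), ← e]; simp)
    simpa using this
  refine ⟨?_, key _ P.arc, ?_, ?_⟩
  · intro i j
    have := P.symm (σ.symm i) (σ.symm j)
    simpa [cperm] using this
  · refine key _ fun i j hij hM k => ?_
    have := P.off i j hij hM (σ.symm k)
    simpa [cperm] using this
  · refine key _ fun i j hij hM => key _ fun k l hkl hM' hne => ?_
    refine P.disj i j hij hM k l hkl hM' fun e => hne ?_
    rw [← Sym2.map_mk (f := σ), e]; rfl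

end Planarity

section Initial

def shearV (f : ℝ → ℝ) (hf : Continuous f) : Pt ≃ₜ Pt where
  toFun z := (z.1, z.2 + f z.1)
  invFun z := (z.1, z.2 - f z.1)
  left_inv z := by simp
  right_inv z := by simp
  continuous_toFun := by fun_prop
  continuous_invFun := by fun_prop

def shearH (f : ℝ → ℝ) (hf : Continuous f) : Pt ≃ₜ Pt where
  toFun z := (z.1 + f z.2, z.2)
  invFun z := (z.1 - f z.2, z.2)
  left_inv z := by simp
  right_inv z := by simp
  continuous_toFun := by fun_prop
  continuous_invFun := by fun_prop

theorem interp (v r : Fin 5 → ℝ) (hv : Function.Injective v) :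
    ∃ f : ℝ → ℝ, Continuous f ∧ ∀ k, f (v k) = r k :=
  ⟨fun x => (Lagrange.interpolate Finset.univ v r).eval x, by fun_prop,
    fun k => Lagrange.eval_interpolate_at_node r hv.injOn (Finset.mem_univ k)⟩

theorem homeo_line (p : Fin 5 → Pt) (hp : Function.Injective p) :
    ∃ φ : Pt ≃ₜ Pt, ∀ k, φ (p k) = (0, (k : ℝ)) := by
  have hfin : (⋃ i : Fin 5, ⋃ j : Fin 5,
      {l : ℝ | i ≠ j ∧ (p i).1 + l * (p i).2 = (p j).1 + l * (p j).2}).Finite := by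
    refine finite_iUnion fun i => finite_iUnion fun j => Set.Subsingleton.finite ?_
    rintro l ⟨hij, hl⟩ l' ⟨-, hl'⟩
    by_contra hne
    have h2 : (l - l') * ((p i).2 - (p j).2) = 0 := by linear_combination hl - hl'
    have h3 : (p i).2 = (p j).2 := by
      rcases mul_eq_zero.mp h2 with h | h
      · exact absurd (sub_eq_zero.mp h) hne
      · exact sub_eq_zero.mp h
    apply hij; apply hp
    ext
    · rw [h3] at hl; linarith
    · exact h3
  obtain ⟨l, hl⟩ := hfin.exists_notMem
  have hinj : Function.Injective fun k => (p k).1 + l * (p k).2 := by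
    intro i j e
    by_contra hij
    exact hl (mem_iUnion.mpr ⟨i, mem_iUnion.mpr ⟨j, hij, e⟩⟩)
  obtain ⟨g, hg, hg'⟩ := interp _ (fun k => (k : ℝ) - (p k).2) hinj
  have hinj2 : Function.Injective fun k : Fin 5 => (k : ℝ) := by
    intro i j e
    have : ((i : ℕ) : ℝ) = ((j : ℕ) : ℝ) := e
    exact Fin.ext (by exact_mod_cast this)
  obtain ⟨h, hh, hh'⟩ := interp _ (fun k => - ((p k).1 + l * (p k).2)) hinj2
  refine ⟨(shearH (fun y => l * y) (by fun_prop)).trans ((shearV g hg).trans (shearH h hh)), ?_⟩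
  intro k
  have e1 : g ((p k).1 + l * (p k).2) = (k : ℝ) - (p k).2 := hg' k
  have e2 : h (k : ℝ) = - ((p k).1 + l * (p k).2) := hh' k
  simp [shearH, shearV, e1, e2]

theorem homeo_pts (p q : Fin 5 → Pt) (hp : Function.Injective p) (hq : Function.Injective q) :
    ∃ φ : Pt ≃ₜ Pt, ∀ k, φ (p k) = q k := by
  obtain ⟨φ, h⟩ := homeo_line p hp
  obtain ⟨ψ, h'⟩ := homeo_line q hq
  refine ⟨φ.trans ψ.symm, fun k => ?_⟩
  rw [Homeomorph.trans_apply, h, ← h', Homeomorph.symm_apply_apply]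

theorem good_init (q : Fin 5 → Pt) (hq : Function.Injective q) :
    ∃ c φ, Good q c φ X0 s(0, 4) := by
  obtain ⟨φ, h⟩ := homeo_pts X0 q X0_inj hq
  refine ⟨fun i j t => φ (line (X0 i) (X0 j) t), φ, h, ?_, ?_⟩
  · intro i j
    funext t
    have : line (X0 j) (X0 i) t = line (X0 i) (X0 j) (1 - t) := by
      unfold line
      rw [add_comm]; congr 2; ring
    beta_reduce
    rw [this]
  · intro i j hij _
    have hne : X0 i ≠ X0 j := fun e => hij (X0_inj e)
    refine ⟨⟨(φ.continuous.comp (line_cont _ _)).continuousOn,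
      (φ.injective.comp (line_inj hne)).injOn, ?_, ?_⟩, ?_⟩
    · simp [line, h]
    · simp [line, h]
    · unfold arcBody
      rw [← line_image, image_image]

theorem state_init (q : Fin 5 → Pt) (hq : Function.Injective q) (x y : Fin 5) (hxy : x ≠ y) :
    ∃ c, State q c s(x, y) := by
  have : ∀ x y : Fin 5, x ≠ y → ∃ σ : Equiv.Perm (Fin 5), σ 0 = x ∧ σ 4 = y := by
    intro x y hxy
    refine ⟨(Equiv.swap 4 (Equiv.swap 0 x y)).trans (Equiv.swap 0 x), ?_, ?_⟩
    · rw [Equiv.trans_apply, Equiv.swap_apply_of_ne_of_ne (a := 4) (x := 0) (by decide)]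
      · simp
      · intro e
        apply hxy
        have := congrArg (Equiv.swap 0 x) e
        simpa using this
    · simp
  obtain ⟨σ, rfl, rfl⟩ := this x y hxy
  obtain ⟨c, φ, h⟩ := good_init _ (inj_comp hq σ)
  rw [← cperm_symm c σ] at h
  exact ⟨_, σ, φ, rfl, h⟩

/-- One step of the construction, on the level of labels. -/
theorem label_step {q c M} (hq : Function.Injective q) (h : State q c M) (r x y : Fin 5)
    (hxy : x ≠ y) :
    ∃ c' M', State q c' M' ∧ (M' = s(x, y) ∨ (M' = M ∧ r ∉ M)) ∧
      ∃ c₁, (c₁ = c ∨ ∃ b d, RR q r b d c c₁) ∧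
        ∀ k l, k ≠ l → k ≠ r → l ≠ r → s(k, l) ≠ M' → c' k l = c₁ k l := by
  by_cases hr : r ∈ M
  swap
  · exact ⟨c, M, h, Or.inr ⟨rfl, hr⟩, c, Or.inl rfl, fun _ _ _ _ _ _ => rfl⟩
  by_cases hM : M = s(x, y)
  · exact ⟨c, M, h, Or.inl hM, c, Or.inl rfl, fun _ _ _ _ _ _ => rfl⟩
  obtain ⟨u, rfl⟩ := Sym2.mem_iff_exists.mp hr
  have hru : r ≠ u := by
    obtain ⟨σ, φ, e, -⟩ := h
    rintro rfl
    have : σ 0 = σ 4 := by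
      rcases Sym2.eq_iff.mp e with ⟨a, b⟩ | ⟨a, b⟩
      · rw [← a, ← b]
      · rw [← a, ← b]
    exact absurd (σ.injective this) (by decide)
  -- the case of a target pair containing `r`
  have caseR : ∀ z, z ≠ r → z ≠ u → ∃ c', State q c' s(r, z) ∧ ∃ b d, RR q r b d c c' := by
    intro z hz hz'
    obtain ⟨c', b, d, h1, h2⟩ := fullM1 hq h hz hz'
    exact ⟨c', h1, b, d, h2⟩
  by_cases hxr : x = r
  · subst hxr
    obtain ⟨c', h1, h2⟩ := caseR y hxy.symm (by rintro rfl; exact hM rfl)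
    exact ⟨c', _, h1, Or.inl rfl, c', Or.inr h2, fun _ _ _ _ _ _ => rfl⟩
  by_cases hyr : y = r
  · subst hyr
    obtain ⟨c', h1, h2⟩ := caseR x hxy (by rintro rfl; exact hM Sym2.eq_swap)
    exact ⟨c', _, h1, Or.inl Sym2.eq_swap, c', Or.inr h2, fun _ _ _ _ _ _ => rfl⟩
  have offr : ∀ k l z : Fin 5, k ≠ r → l ≠ r → s(k, l) ≠ s(r, z) := by
    intro k l z hk hl e
    rcases Sym2.eq_iff.mp e with ⟨a, b⟩ | ⟨a, b⟩
    · exact hk a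
    · exact hl b
  by_cases hu : x = u ∨ y = u
  · have : ∀ r x y : Fin 5, ∃ z, z ≠ r ∧ z ≠ x ∧ z ≠ y := by decide
    obtain ⟨z, z1, z2, z3⟩ := this r x y
    obtain ⟨c₁, h1, h2⟩ := caseR z z1 (by rcases hu with rfl | rfl <;> assumption)
    obtain ⟨c', h3, h4⟩ := fullM2 hq h1 hxy
      (by simp only [Sym2.mem_iff, not_or]; exact ⟨hxr, z2.symm⟩)
      (by simp only [Sym2.mem_iff, not_or]; exact ⟨hyr, z3.symm⟩)
    exact ⟨c', _, h3, Or.inl rfl, c₁, Or.inr h2, fun k l hkl hk hl hM' =>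
      h4 k l hkl (offr k l z hk hl) hM'⟩
  · push Not at hu
    obtain ⟨c', h3, h4⟩ := fullM2 hq h hxy
      (by simp only [Sym2.mem_iff, not_or]; exact ⟨hxr, hu.1⟩)
      (by simp only [Sym2.mem_iff, not_or]; exact ⟨hyr, hu.2⟩)
    exact ⟨c', _, h3, Or.inl rfl, c, Or.inl rfl, fun k l hkl hk hl hM' =>
      h4 k l hkl (offr k l u hk hl) hM'⟩

end Initial
end GraphStories

namespace GraphStories

section Final

/-- The label of a vertex. -/
def lab {n : ℕ} (v : Fin n) : Fin 5 := ⟨v.val % 5, Nat.mod_lt _ (by norm_num)⟩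

/-- The drawing determined by the curves on labels. -/
def mkD (n : ℕ) (q : Fin 5 → Pt) (c : Fin 5 → Fin 5 → ℝ → Pt) : RawDrawing n :=
  ⟨fun v => q (lab v), fun u v => c (lab u) (lab v)⟩

theorem lab_inj {n : ℕ} {S : Set (Fin n)} (hS : InjOn lab S) {u v x y : Fin n} (hu : u ∈ S)
    (hv : v ∈ S) (hx : x ∈ S) (hy : y ∈ S) (h : s(lab u, lab v) = s(lab x, lab y)) :
    s(u, v) = s(x, y) := by
  rcases Sym2.eq_iff.mp h with ⟨a, b⟩ | ⟨a, b⟩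
  · rw [hS hu hx a, hS hv hy b]
  · rw [hS hu hy a, hS hv hx b, Sym2.eq_swap]

theorem planar_of {n : ℕ} {G : SimpleGraph (Fin n)} {S : Set (Fin n)} {P : Set Pt} {q c M}
    (hq : Function.Injective q) (h : PS q c M) (hS : InjOn lab S) (hP : ∀ k, q k ∈ P)
    (hM : ∀ u ∈ S, ∀ v ∈ S, G.Adj u v → s(lab u, lab v) ≠ M) :
    IsPlanarDrawingOn n G S P (mkD n q c) := by
  have hne : ∀ u ∈ S, ∀ v ∈ S, G.Adj u v → lab u ≠ lab v := fun u hu v hv ha e =>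
    ha.ne (hS hu hv e)
  refine ⟨fun v _ => hP _, fun u hu v hv e => hS hu hv (hq e), fun u v => h.symm _ _,
    fun u hu v hv ha => h.arc _ _ (hne u hu v hv ha) (hM u hu v hv ha),
    fun u hu v hv ha w _ => h.off _ _ (hne u hu v hv ha) (hM u hu v hv ha) _, ?_⟩
  intro u hu v hv x hx y hy ha ha' hxy
  exact (h.disj _ _ (hne u hu v hv ha) (hM u hu v hv ha) _ _ (hne x hx y hy ha')
    (hM x hx y hy ha') (fun e => hxy (lab_inj hS hu hv hx hy e))).inter_eq

theorem face_facts {X T : Set Pt} {p : Pt} (hT : IsPreconnected T) (hp : p ∈ T)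
    (hd : Disjoint T X) : T ⊆ faceOf X p :=
  hT.subset_connectedComponentIn hp (fun _ hz hz' => Set.disjoint_left.mp hd hz hz')

theorem face_ne {X X' : Set Pt} {p z : Pt} (hp' : p ∉ X') (hz : z ∈ closure (faceOf X p))
    (hzX : z ∈ X) (hzX' : z ∉ X') : faceOf X p ≠ faceOf X' p := by
  intro e
  rw [e] at hz
  have h1 : IsPreconnected (insert z (faceOf X' p)) :=
    isPreconnected_connectedComponentIn.subset_closure (subset_insert _ _)
      (insert_subset hz subset_closure)
  have h2 : insert z (faceOf X' p) ⊆ faceOf X' p := by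
    refine h1.subset_connectedComponentIn (mem_insert_of_mem _ ?_) ?_
    · exact mem_connectedComponentIn hp'
    · exact insert_subset hzX' (connectedComponentIn_subset _ _)
  have h3 : z ∈ faceOf X p := by rw [e]; exact h2 (mem_insert _ _)
  exact connectedComponentIn_subset _ _ h3 hzX

theorem image_disj {n : ℕ} {G : SimpleGraph (Fin n)} {S : Set (Fin n)} {q c r} {T : Set Pt}
    (hS : InjOn lab S) (hr : ∀ v ∈ S, lab v ≠ r)
    (hT : ∀ k l, k ≠ l → k ≠ r → l ≠ r → Disjoint T (arcBody (c k l)))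
    (he : ∀ k l, k ≠ l → k ≠ r → l ≠ r → q k ∈ arcBody (c k l)) :
    Disjoint T (drawingImage n G S (mkD n q c)) := by
  unfold drawingImage
  rw [disjoint_union_right]
  constructor
  · rw [Set.disjoint_right]
    rintro _ ⟨v, hv, rfl⟩
    have : ∀ k r : Fin 5, k ≠ r → ∃ l, k ≠ l ∧ l ≠ r := by decide
    obtain ⟨l, h1, h2⟩ := this (lab v) r (hr v hv)
    exact Set.disjoint_right.mp (hT _ l h1 (hr v hv) h2) (he _ l h1 (hr v hv) h2)
  · simp only [disjoint_iUnion_right]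
    intro u v hu hv ha
    exact hT _ _ (fun e => ha.ne (hS hu hv e)) (hr u hu) (hr v hv)

theorem drawingImage_congr {n : ℕ} {G : SimpleGraph (Fin n)} {S : Set (Fin n)} {q c c'}
    (h : ∀ u ∈ S, ∀ v ∈ S, G.Adj u v → c (lab u) (lab v) = c' (lab u) (lab v)) :
    drawingImage n G S (mkD n q c) = drawingImage n G S (mkD n q c') := by
  unfold drawingImage
  congr 1
  refine iUnion_congr fun u => iUnion_congr fun v => iUnion_congr fun hu =>
    iUnion_congr fun hv => iUnion_congr fun ha => ?_
  change arcBody (c _ _) = arcBody (c' _ _)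
  rw [h u hu v hv ha]

theorem reroute_of {n : ℕ} {G : SimpleGraph (Fin n)} {S : Set (Fin n)} {P : Set Pt}
    {q c c₁ c' r b d} (hP : ∀ k, q k ∈ P) (hS : InjOn lab S) (hr : ∀ v ∈ S, lab v ≠ r)
    (hR : RR q r b d c c₁)
    (hc : ∀ u ∈ S, ∀ v ∈ S, G.Adj u v → c' (lab u) (lab v) = c₁ (lab u) (lab v)) :
    ∃ F : Finset (Sym2 (Fin n)), F.card ≤ 1 ∧
        (∀ u ∈ S, ∀ v ∈ S,
            G.Adj u v → s(u, v) ∉ F → (mkD n q c').curve u v = (mkD n q c).curve u v) ∧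
        (∀ e ∈ F, ∃ p ∈ P, IsRerouteStep n G S (mkD n q c) (mkD n q c') e p) := by
  have hne : ∀ u ∈ S, ∀ v ∈ S, G.Adj u v → lab u ≠ lab v := fun u hu v hv ha e =>
    ha.ne (hS hu hv e)
  by_cases hex : ∃ u ∈ S, ∃ v ∈ S, G.Adj u v ∧ lab u = b ∧ lab v = d
  swap
  · refine ⟨∅, by simp, ?_, by simp⟩
    intro u hu v hv ha _
    change c' (lab u) (lab v) = c (lab u) (lab v)
    rw [hc u hu v hv ha]
    refine hR.same _ _ (hne u hu v hv ha) (hr u hu) (hr v hv) fun e => hex ?_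
    rcases Sym2.eq_iff.mp e with ⟨e1, e2⟩ | ⟨e1, e2⟩
    · exact ⟨u, hu, v, hv, ha, e1, e2⟩
    · exact ⟨v, hv, u, hu, ha.symm, e2, e1⟩
  obtain ⟨u, hu, v, hv, ha, rfl, rfl⟩ := hex
  refine ⟨{s(u, v)}, by simp, ?_, ?_⟩
  · intro x hx y hy ha' hF
    change c' (lab x) (lab y) = c (lab x) (lab y)
    rw [hc x hx y hy ha']
    refine hR.same _ _ (hne x hx y hy ha') (hr x hx) (hr y hy) fun e => hF ?_
    rw [lab_inj hS hx hy hu hv e]; simp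
  · intro e he
    rw [Finset.mem_singleton] at he
    obtain ⟨T, t1, t2, t3, t4⟩ := hR.old
    obtain ⟨T', t1', t2', t3', t4'⟩ := hR.new
    obtain ⟨z, z1, z2⟩ := hR.sep
    obtain ⟨Φ, f1, f2⟩ := hR.emb
    have eX : drawingImage n G S (mkD n q c') = drawingImage n G S (mkD n q c₁) :=
      drawingImage_congr hc
    have d1 : Disjoint T (drawingImage n G S (mkD n q c)) :=
      image_disj hS hr t3 fun k l h1 h2 h3 => (hR.endp k l h1 h2 h3).1
    have d2 : Disjoint T' (drawingImage n G S (mkD n q c₁)) :=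
      image_disj hS hr t3' fun k l h1 h2 h3 => (hR.endp k l h1 h2 h3).2
    have d3 : Disjoint {z} (drawingImage n G S (mkD n q c₁)) :=
      image_disj hS hr (fun k l h1 h2 h3 => disjoint_singleton_left.mpr (z2 k l h1 h2 h3))
        fun k l h1 h2 h3 => (hR.endp k l h1 h2 h3).2
    have s1 := face_facts t1 t2 d1
    have s2 := face_facts t1' t2' d2
    have i1 : arcInterior ((mkD n q c).curve u v) ⊆
        closure (faceOf (drawingImage n G S (mkD n q c)) (q r)) :=
      t4.trans (closure_mono s1)
    refine ⟨q r, hP r, u, v, he, hu, hv, ha, Set.disjoint_left.mp d1 t2, ?_, i1, ?_, ?_, ?_⟩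
    · rw [eX]; exact Set.disjoint_left.mp d2 t2'
    · rw [eX]
      have : (mkD n q c').curve u v = c₁ (lab u) (lab v) := hc u hu v hv ha
      rw [this]
      exact t4'.trans (closure_mono s2)
    · rw [eX]
      refine face_ne (Set.disjoint_left.mp d2 t2') (i1 z1) ?_ (disjoint_singleton_left.mp d3)
      refine Or.inr ?_
      simp only [mem_iUnion]
      refine ⟨u, v, hu, hv, ha, ?_⟩
      obtain ⟨t, ht, e⟩ := z1
      exact ⟨t, Ioo_subset_Icc_self ht, e⟩
    · refine ⟨Φ, fun w hw => f1 _ (hr w hw), ?_, image_empty _⟩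
      intro x hx y hy ha'
      change Φ '' arcBody (c (lab x) (lab y)) = arcBody (c' (lab x) (lab y))
      rw [hc x hx y hy ha']
      exact f2 _ _ (hne x hx y hy ha') (hr x hx) (hr y hy)

theorem lab_injOn (n i : ℕ) : InjOn lab (window n 5 i) := by
  rintro u ⟨hu1, hu2⟩ v ⟨hv1, hv2⟩ e
  have e' : u.val % 5 = v.val % 5 := congrArg Fin.val e
  apply Fin.ext
  omega

theorem exists_nonadj {n : ℕ} {G : SimpleGraph (Fin n)} (hK : ¬ ContainsK5 n G) (i : ℕ)
    (hi : 5 + i ≤ n) : ∃ u ∈ window n 5 (5 + i), ∃ v ∈ window n 5 (5 + i), u ≠ v ∧ ¬ G.Adj u v := by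
  by_contra hcon
  push Not at hcon
  have hinj : Function.Injective (fun k : Fin 5 => (⟨i + k.val, by omega⟩ : Fin n)) := by
    intro a b e
    have := congrArg Fin.val e
    simp only at this
    exact Fin.ext (by omega)
  refine hK ⟨fun k => ⟨i + k.val, by omega⟩, hinj, fun a b hab => ?_⟩
  refine hcon _ ?_ _ ?_ (fun e => hab (hinj e))
  · constructor <;> simp only <;> omega
  · constructor <;> simp only <;> omega

/-- The invariant of the construction. -/
def Inv (n : ℕ) (G : SimpleGraph (Fin n)) (q : Fin 5 → Pt) (i : ℕ)
    (s : (Fin 5 → Fin 5 → ℝ → Pt) × Sym2 (Fin 5)) : Prop :=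
  State q s.1 s.2 ∧ ∀ u ∈ window n 5 (5 + i), ∀ v ∈ window n 5 (5 + i), G.Adj u v →
    s(lab u, lab v) ≠ s.2

/-- The relation between consecutive drawings. -/
def StepRel (n : ℕ) (G : SimpleGraph (Fin n)) (q : Fin 5 → Pt) (i : ℕ)
    (s s' : (Fin 5 → Fin 5 → ℝ → Pt) × Sym2 (Fin 5)) : Prop :=
  ∃ c₁, (c₁ = s.1 ∨ ∃ b d, RR q ⟨(5 + i) % 5, Nat.mod_lt _ (by norm_num)⟩ b d s.1 c₁) ∧
    ∀ u ∈ window n 5 (5 + i) ∩ window n 5 (5 + i + 1),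
    ∀ v ∈ window n 5 (5 + i) ∩ window n 5 (5 + i + 1),
      G.Adj u v → s'.1 (lab u) (lab v) = c₁ (lab u) (lab v)

theorem lab_ne_r {n i : ℕ} {v : Fin n} (hv : v ∈ window n 5 (5 + i) ∩ window n 5 (5 + i + 1)) :
    lab v ≠ ⟨(5 + i) % 5, Nat.mod_lt _ (by norm_num)⟩ := by
  obtain ⟨⟨h1, h2⟩, ⟨h3, h4⟩⟩ := hv
  intro e
  have e' : v.val % 5 = (5 + i) % 5 := congrArg Fin.val e
  omega

theorem nonadj_label {n i : ℕ} {G : SimpleGraph (Fin n)} {u v : Fin n}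
    (hu : u ∈ window n 5 i) (hv : v ∈ window n 5 i) (ha : ¬ G.Adj u v) :
    ∀ x ∈ window n 5 i, ∀ y ∈ window n 5 i, G.Adj x y →
      s(lab x, lab y) ≠ s(lab u, lab v) := by
  intro x hx y hy hxy e
  rcases Sym2.eq_iff.mp (lab_inj (lab_injOn n i) hx hy hu hv e) with ⟨rfl, rfl⟩ | ⟨rfl, rfl⟩
  · exact ha hxy
  · exact ha hxy.symm

theorem step_exists {n : ℕ} {G : SimpleGraph (Fin n)} (hK : ¬ ContainsK5 n G) {q : Fin 5 → Pt}
    (hq : Function.Injective q) (i : ℕ) (hi : 5 + i + 1 ≤ n) (s) (hs : Inv n G q i s) :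
    ∃ s', Inv n G q (i + 1) s' ∧ StepRel n G q i s s' := by
  obtain ⟨u, hu, v, hv, huv, ha⟩ := exists_nonadj hK (i + 1) (by omega)
  have hlab : lab u ≠ lab v := fun e => huv (lab_injOn _ _ hu hv e)
  obtain ⟨c', M', h1, h2, c₁, h3, h4⟩ := label_step hq hs.1
    ⟨(5 + i) % 5, Nat.mod_lt _ (by norm_num)⟩ (lab u) (lab v) hlab
  have hI : ∀ x ∈ window n 5 (5 + (i + 1)), ∀ y ∈ window n 5 (5 + (i + 1)), G.Adj x y →
      s(lab x, lab y) ≠ M' := by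
    rcases h2 with rfl | ⟨rfl, hr⟩
    · exact nonadj_label hu hv ha
    · intro x hx y hy hxy e
      have hW : ∀ z ∈ window n 5 (5 + (i + 1)), lab z ∈ s.2 → z ∈ window n 5 (5 + i) := by
        rintro z ⟨z1, z2⟩ hz
        have hzr : z.val % 5 ≠ (5 + i) % 5 := by
          intro e'
          apply hr
          have : (⟨(5 + i) % 5, Nat.mod_lt _ (by norm_num)⟩ : Fin 5) = lab z := Fin.ext e'.symm
          rw [this]; exact hz
        have : z.val ≠ 5 + i := fun h => hzr (by rw [h])
        constructor <;> omega
      refine hs.2 x (hW x hx ?_) y (hW y hy ?_) hxy e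
      · rw [← e]; simp
      · rw [← e]; simp
  refine ⟨(c', M'), ⟨h1, hI⟩, c₁, h3, ?_⟩
  intro x hx y hy hxy
  exact h4 _ _ (fun e => hxy.ne (lab_injOn _ _ hx.1 hy.1 e)) (lab_ne_r hx) (lab_ne_r hy)
    (hI x hx.2 y hy.2 hxy)

theorem exists_seq {n : ℕ} {G : SimpleGraph (Fin n)} (hn : 5 ≤ n) (hK : ¬ ContainsK5 n G)
    {q : Fin 5 → Pt} (hq : Function.Injective q) :
    ∃ s : ℕ → (Fin 5 → Fin 5 → ℝ → Pt) × Sym2 (Fin 5),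
      (∀ i, 5 + i ≤ n → Inv n G q i (s i)) ∧
      (∀ i, 5 + i + 1 ≤ n → StepRel n G q i (s i) (s (i + 1))) := by
  classical
  have h0 : ∃ s, Inv n G q 0 s := by
    obtain ⟨u, hu, v, hv, huv, ha⟩ := exists_nonadj hK 0 (by omega)
    have hlab : lab u ≠ lab v := fun e => huv (lab_injOn _ _ hu hv e)
    obtain ⟨c, hc⟩ := state_init q hq _ _ hlab
    exact ⟨(c, _), hc, nonadj_label hu hv ha⟩
  obtain ⟨s0, hs0⟩ := h0
  have hstep : ∀ i, ∀ s, ∃ s', 5 + i + 1 ≤ n → Inv n G q i s →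
      Inv n G q (i + 1) s' ∧ StepRel n G q i s s' := by
    intro i s
    by_cases h : 5 + i + 1 ≤ n ∧ Inv n G q i s
    · obtain ⟨s', h'⟩ := step_exists hK hq i h.1 s h.2
      exact ⟨s', fun _ _ => h'⟩
    · exact ⟨s, fun h1 h2 => absurd ⟨h1, h2⟩ h⟩
  choose f hf using hstep
  let S : ℕ → (Fin 5 → Fin 5 → ℝ → Pt) × Sym2 (Fin 5) := fun i => Nat.rec s0 (fun i s => f i s) i
  have hS : ∀ i, 5 + i ≤ n → Inv n G q i (S i) := by
    intro i
    induction i with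
    | zero => intro _; exact hs0
    | succ i ih => intro h; exact (hf i (S i) (by omega) (ih (by omega))).1
  exact ⟨S, hS, fun i hi => (hf i (S i) hi (hS i (by omega))).2⟩

theorem realization {n : ℕ} {G : SimpleGraph (Fin n)} (hn : 5 ≤ n) (hK : ¬ ContainsK5 n G)
    (P : Finset Pt) (hP : P.card = 5) : Nonempty (RerouteRealization n 5 1 G ↑P) := by
  let q : Fin 5 → Pt := fun k => ((P.equivFinOfCardEq hP).symm k : Pt)
  have hq : Function.Injective q := fun a b e =>
    (P.equivFinOfCardEq hP).symm.injective (Subtype.ext e)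
  have hqP : ∀ k, q k ∈ (↑P : Set Pt) := fun k => ((P.equivFinOfCardEq hP).symm k).2
  obtain ⟨s, h1, h2⟩ := exists_seq hn hK hq
  refine ⟨⟨fun i => mkD n q (s (i - 5)).1, ?_, fun _ _ _ _ _ => rfl, ?_⟩⟩
  · intro i hi1 hin
    by_cases hi : 5 ≤ i
    · obtain ⟨j, rfl⟩ := Nat.exists_eq_add_of_le hi
      have hI := h1 j hin
      rw [Nat.add_sub_cancel_left]
      exact planar_of hq hI.1.PS (lab_injOn _ _) hqP hI.2
    · have hI := h1 0 (by omega)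
      have e : i - 5 = 0 := by omega
      rw [e]
      have hW : ∀ u ∈ window n 5 i, u ∈ window n 5 (5 + 0) := by
        rintro u ⟨a, b⟩
        constructor <;> omega
      exact planar_of hq hI.1.PS (lab_injOn _ _) hqP
        fun u hu v hv ha => hI.2 u (hW u hu) v (hW v hv) ha
  · intro i hi2 hin
    by_cases hi : 6 ≤ i
    · obtain ⟨j, rfl⟩ : ∃ j, i = 5 + j + 1 := ⟨i - 6, by omega⟩
      have e1 : 5 + j + 1 - 1 = 5 + j := by omega
      have e2 : 5 + j + 1 - 5 = j + 1 := by omega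
      have e3 : 5 + j - 5 = j := by omega
      rw [e1, e2, e3]
      obtain ⟨c₁, h3, h4⟩ := h2 j hin
      rcases h3 with rfl | ⟨b, d, hR⟩
      · exact ⟨∅, by simp, fun u hu v hv ha _ => h4 u hu v hv ha, by simp⟩
      · exact reroute_of hqP ((lab_injOn n _).mono inter_subset_left) (fun v hv => lab_ne_r hv)
          hR h4
    · have e1 : i - 5 = 0 := by omega
      have e2 : i - 1 - 5 = 0 := by omega
      rw [e1, e2]
      exact ⟨∅, by simp, fun u hu v hv ha _ => rfl, by simp⟩

theorem exists_five_points : ∃ P : Finset Pt, P.card = 5 := by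
  refine ⟨Finset.univ.map ⟨X0, X0_inj⟩, by simp⟩

end Final
end GraphStories

namespace GraphStories

/-- **Theorem 4.** A minimal graph story `S = (G, 5, τ)` is
1-reroute realizable if and only if `G` does not contain `K₅`; in particular,
if `G` does not contain `K₅` then `S` admits a 1-reroute realization on any
arbitrarily chosen set of `5` points. -/
theorem one_reroute_realizable_iff_no_K5
    (n : ℕ) (G : SimpleGraph (Fin n)) (hn : 5 ≤ n) (hvis : Visible n 5 G) :
    (RerouteRealizable n 5 0 1 G ↔ ¬ ContainsK5 n G) ∧
      (¬ ContainsK5 n G → ∀ P : Finset Pt, P.card = 5 →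
        Nonempty (RerouteRealization n 5 1 G ↑P)) := by
  refine ⟨⟨not_K5_of_realizable n G hvis, fun hK => ?_⟩, fun hK P hP => realization hn hK P hP⟩
  obtain ⟨P, hP⟩ := exists_five_points
  exact ⟨P, by simpa using hP, realization hn hK P hP⟩

end GraphStories
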